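/- arXiv:2408.10928 — 3 statements merged into one kernel-verified Lean document; each statement's English description precedes it below -/
import Mathlib

section
/- Let R be an associative unital ring and let 0 → M → C → M → 0 be a short exact sequence of left R-modules in which C is cotorsion. Then M is cotorsion. -/
universe u

open CategoryTheory

/-- A left module `M` over a ring `R` is *flat* if it satisfies Villamayor's equational
criterion of flatness; over an arbitrary associative unital ring this is equivalent to
the usual definition of flatness. -/
def Module.IsFlat (R : Type*) [Ring R] (M : Type*) [AddCommGroup M] [Module R M] : Prop :=
  ∀ (n : ℕ) (r : Fin n → R) (x : Fin n → M), ∑ i, r i • x i = 0 →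
    ∃ (m : ℕ) (a : Fin n → Fin m → R) (y : Fin m → M),
      (∀ i, x i = ∑ j, a i j • y j) ∧ ∀ j, ∑ i, r i * a i j = 0

/-- The `n`-th Ext group of two left `R`-modules, as an abelian group
(computed in the abelian category `ModuleCat R` by deriving the Hom functor). -/
def ModuleCat.extGroup {R : Type u} [Ring R] (F C : ModuleCat.{u} R) (n : ℕ) : Type u :=
  ((Ext ℤ (ModuleCat.{u} R) n).obj (Opposite.op F)).obj C

/-- A left `R`-module `C` is *cotorsion* if `Ext¹_R(F, C) = 0` for every flat left
`R`-module `F`. -/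
def ModuleCat.IsCotorsion {R : Type u} [Ring R] (C : ModuleCat.{u} R) : Prop :=
  ∀ F : ModuleCat.{u} R, Module.IsFlat R F → Subsingleton (F.extGroup C 1)

/-!
If every linear map from a flat module `F` to `M` lifts along `p : C → M`, then the long exact
sequence and `Ext¹(F, C) = 0` give `Ext¹(F, M) = 0`. The flat modules with this lifting property
include the finitely generated projective ones, and every flat module is a direct limit of those
(Lazard), so it suffices that the property passes to direct limits. By induction on the cardinality
of the index set, these reduce to colimits of continuous well-ordered chains `A γ`. Such a colimit
is the quotient of `⨁ γ, A γ` by a submodule filtered with factors `colim_{δ < γ} A δ`. Lifts extend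
along the steps of a filtration with flat factors, because `C` is cotorsion. Lifting descends
from `W / N` to a flat quotient `W / V` when it holds for `V / N`: the lift maps `V / N` into
`ker p ≅ M`, and the resulting map to `M` lifts to `C` and extends to `W`.
-/

namespace CotorsionPeriodicity

section Factorization

variable {R : Type*} [Ring R] {A B D : Type*} [AddCommGroup A] [AddCommGroup B] [AddCommGroup D]
  [Module R A] [Module R B] [Module R D]

theorem exists_comp_eq_of_ker_le {q : A →ₗ[R] B} (hq : Function.Surjective q) {f : A →ₗ[R] D}
    (h : LinearMap.ker q ≤ LinearMap.ker f) : ∃ g : B →ₗ[R] D, g ∘ₗ q = f := by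
  refine ⟨(LinearMap.ker q).liftQ f h ∘ₗ (q.quotKerEquivOfSurjective hq).symm.toLinearMap, ?_⟩
  ext x
  have symm_apply : (q.quotKerEquivOfSurjective hq).symm (q x) = Submodule.Quotient.mk x :=
    (LinearEquiv.symm_apply_eq _).2 rfl
  simp [symm_apply]

theorem exists_comp_eq_of_range_le {i : B →ₗ[R] D} (hi : Function.Injective i) {f : A →ₗ[R] D}
    (h : LinearMap.range f ≤ LinearMap.range i) : ∃ g : A →ₗ[R] B, i ∘ₗ g = f := by
  refine ⟨(LinearEquiv.ofInjective i hi).symm.toLinearMap ∘ₗ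
    f.codRestrict (LinearMap.range i) fun x ↦ h ⟨x, rfl⟩, ?_⟩
  ext x
  exact congrArg Subtype.val ((LinearEquiv.ofInjective i hi).apply_symm_apply _)

end Factorization

section Ext

theorem exists_extension_of_projective {R : Type*} [Ring R] {F C P U : Type*} [AddCommGroup F]
    [AddCommGroup C] [AddCommGroup P] [AddCommGroup U] [Module R F] [Module R C] [Module R P]
    [Module R U] [Module.Projective R P] {ε : P →ₗ[R] F} (hε : Function.Surjective ε)
    (extend : ∀ f : LinearMap.ker ε →ₗ[R] C, ∃ g : P →ₗ[R] C, g ∘ₗ (LinearMap.ker ε).subtype = f)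
    {q : U →ₗ[R] F} (hq : Function.Surjective q) (f : LinearMap.ker q →ₗ[R] C) :
    ∃ g : U →ₗ[R] C, g ∘ₗ (LinearMap.ker q).subtype = f := by
  obtain ⟨l, rfl⟩ := Module.projective_lifting_property q ε hq
  obtain ⟨h, hh⟩ := extend (f ∘ₗ l.restrict fun _ hx ↦ hx)
  have surjective : Function.Surjective ((LinearMap.ker q).subtype.coprod l) := fun u ↦ by
    obtain ⟨x, hx⟩ := hε (q u)
    exact ⟨(⟨u - l x, by simpa [sub_eq_zero] using hx.symm⟩, x), by simp⟩
  obtain ⟨g, hg⟩ := exists_comp_eq_of_ker_le surjective (f := f.coprod h) <| by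
    rintro ⟨v, x⟩ hvx
    have hvx : (v : U) = -l x := eq_neg_of_add_eq_zero_left hvx
    have hx : x ∈ LinearMap.ker (q ∘ₗ l) := by simpa [hvx] using v.2
    obtain rfl : v = -l.restrict (fun _ hx ↦ hx) (⟨x, hx⟩ : LinearMap.ker (q ∘ₗ l)) :=
      Subtype.ext hvx
    simpa [neg_add_eq_zero] using (LinearMap.congr_fun hh ⟨x, hx⟩).symm
  exact ⟨g, LinearMap.ext fun v ↦ by simpa using LinearMap.congr_fun hg (v, 0)⟩

variable {R : Type u} [Ring R]

theorem subsingleton_extGroup_one_iff_of_projectiveResolution {F C : ModuleCat.{u} R}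
    (P : ProjectiveResolution F) :
    Subsingleton (F.extGroup C 1) ↔ ∀ f : P.complex.X 1 ⟶ C, P.complex.d 2 1 ≫ f = 0 →
      ∃ g : P.complex.X 0 ⟶ C, P.complex.d 1 0 ≫ g = f := by
  have isZero_iff : Subsingleton (F.extGroup C 1) ↔
      Limits.IsZero ((P.complex.linearYonedaObj ℤ C).homology 1) := by
    rw [← (P.isoExt (R := ℤ) 1 C).isZero_iff, ModuleCat.isZero_iff_subsingleton]
    rfl
  rw [isZero_iff, ← HomologicalComplex.exactAt_iff_isZero_homology,
    HomologicalComplex.exactAt_iff' _ 0 1 2 (by simp) (by simp), ShortComplex.moduleCat_exact_iff]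
  rfl

theorem subsingleton_extGroup_one_iff {F C : ModuleCat.{u} R} :
    Subsingleton (F.extGroup C 1) ↔
      ∀ {U : Type u} [AddCommGroup U] [Module R U] (q : U →ₗ[R] F), Function.Surjective q →
        ∀ f : LinearMap.ker q →ₗ[R] C,
          ∃ g : U →ₗ[R] C, g ∘ₗ (LinearMap.ker q).subtype = f := by
  let P := projectiveResolution F
  let ε : P.complex.X 0 →ₗ[R] F := (P.π.f 0).hom
  have hε : Function.Surjective ε := (ModuleCat.epi_iff_surjective (P.π.f 0)).1 inferInstance
  have : Module.Projective R (P.complex.X 0) :=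
    (IsProjective.iff_projective _).2 (P.projective 0)
  let d₁ : P.complex.X 1 →ₗ[R] LinearMap.ker ε := (P.complex.d 1 0).hom.codRestrict _
    fun x ↦ ConcreteCategory.congr_hom P.complex_d_comp_π_f_zero x
  have hd₁ : Function.Surjective d₁ := fun x ↦ by
    obtain ⟨y, hy⟩ := (ShortComplex.moduleCat_exact_iff _).1 P.exact₀ x.1 x.2
    exact ⟨y, Subtype.ext hy⟩
  rw [subsingleton_extGroup_one_iff_of_projectiveResolution P]
  constructor
  · refine fun h U _ _ q hq ↦ exists_extension_of_projective hε (fun f ↦ ?_) hq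
    obtain ⟨g, hg⟩ := h (ModuleCat.ofHom (f ∘ₗ d₁)) <| by
      ext x
      have d₁_d : d₁ ((P.complex.d 2 1).hom x) = 0 :=
        Subtype.ext (ConcreteCategory.congr_hom (P.complex.d_comp_d 2 1 0) x)
      exact (congrArg f d₁_d).trans f.map_zero
    refine ⟨g.hom, LinearMap.ext fun x ↦ ?_⟩
    obtain ⟨y, rfl⟩ := hd₁ x
    exact ConcreteCategory.congr_hom hg y
  · intro h f hf
    obtain ⟨f', hf'⟩ := exists_comp_eq_of_ker_le hd₁ (f := f.hom) <| fun x hx ↦ by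
      obtain ⟨y, rfl⟩ := (ShortComplex.moduleCat_exact_iff _).1 (P.exact_succ 0) x
        (congrArg Subtype.val hx)
      exact ConcreteCategory.congr_hom hf y
    obtain ⟨g, hg⟩ := h ε hε f'
    refine ⟨ModuleCat.ofHom g, ModuleCat.hom_ext <| LinearMap.ext fun x ↦ ?_⟩
    exact (LinearMap.congr_fun hg (d₁ x)).trans (LinearMap.congr_fun hf' x)

theorem exists_extension_of_isCotorsion {C U : Type u} [AddCommGroup C] [AddCommGroup U]
    [Module R C] [Module R U] (hC : (ModuleCat.of R C).IsCotorsion) {V : Submodule R U}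
    (hV : Module.IsFlat R (U ⧸ V)) (f : V →ₗ[R] C) : ∃ g : U →ₗ[R] C, g ∘ₗ V.subtype = f := by
  have h := subsingleton_extGroup_one_iff.1 (hC (.of R (U ⧸ V)) hV) V.mkQ V.mkQ_surjective
  rw [V.ker_mkQ] at h
  exact h f

end Ext

section Lifts

variable {R M C : Type*} [Ring R] [AddCommGroup M] [Module R M] [AddCommGroup C] [Module R C]

/-- Every linear map from `F` to the target of `p` factors through `p`. For `p : C →ₗ[R] M` with
`C` cotorsion and kernel `M`, this amounts to the vanishing of `Ext¹(F, M)` when `F` is flat. -/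
def Lifts (p : C →ₗ[R] M) (F : Type*) [AddCommGroup F] [Module R F] : Prop :=
  ∀ f : F →ₗ[R] M, ∃ g : F →ₗ[R] C, p ∘ₗ g = f

/-- The flat modules from which all linear maps lift along `p`. -/
structure IsFlatLifting (p : C →ₗ[R] M) (F : Type*) [AddCommGroup F] [Module R F] : Prop where
  flat : Module.IsFlat R F
  lifts : Lifts p F

/-- The module `U / (U ∩ L)`, for submodules `U` and `L` of an ambient module. -/
abbrev Subquotient {W : Type*} [AddCommGroup W] [Module R W] (U L : Submodule R W) : Type _ :=
  U ⧸ L.submoduleOf U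

variable {p : C →ₗ[R] M} {F G : Type*} [AddCommGroup F] [Module R F] [AddCommGroup G] [Module R G]

theorem Lifts.congr (hF : Lifts p F) (e : F ≃ₗ[R] G) : Lifts p G := fun f ↦ by
  obtain ⟨g, hg⟩ := hF (f ∘ₗ e.toLinearMap)
  refine ⟨g ∘ₗ e.symm.toLinearMap, LinearMap.ext fun x ↦ ?_⟩
  simpa using LinearMap.congr_fun hg (e.symm x)

theorem isFlat_congr (hF : Module.IsFlat R F) (e : F ≃ₗ[R] G) : Module.IsFlat R G := by
  intro n r x hx
  obtain ⟨m, a, y, hy, hra⟩ := hF n r (fun i ↦ e.symm (x i)) <| by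
    simpa using congrArg e.symm hx
  exact ⟨m, a, fun j ↦ e (y j), fun i ↦ by simpa using congrArg e (hy i), hra⟩

theorem IsFlatLifting.congr (hF : IsFlatLifting p F) (e : F ≃ₗ[R] G) : IsFlatLifting p G :=
  ⟨isFlat_congr hF.flat e, hF.lifts.congr e⟩

theorem nonempty_subquotient_equiv {W W' : Type*} [AddCommGroup W] [Module R W] [AddCommGroup W']
    [Module R W'] {U L : Submodule R W} {U' L' : Submodule R W'} (f : W →ₗ[R] W')
    (hU : U.map f = U') (hL : ∀ x ∈ U, f x ∈ L' ↔ x ∈ L) :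
    Nonempty (Subquotient U L ≃ₗ[R] Subquotient U' L') := by
  subst hU
  let q := (L'.submoduleOf (U.map f)).mkQ ∘ₗ f.submoduleMap U
  have hq : Function.Surjective q :=
    (Submodule.mkQ_surjective _).comp (f.submoduleMap_surjective U)
  have ker_q : L.submoduleOf U = LinearMap.ker q := Submodule.ext fun x ↦
    (hL x.1 x.2).symm.trans
      (Submodule.Quotient.mk_eq_zero (L'.submoduleOf (U.map f)) (x := f.submoduleMap U x)).symm
  exact ⟨(Submodule.quotEquivOfEq _ _ ker_q).trans (q.quotKerEquivOfSurjective hq)⟩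

end Lifts

section Quotient

variable {R : Type u} [Ring R] {M C W : Type u} [AddCommGroup M] [Module R M] [AddCommGroup C]
  [Module R C] [AddCommGroup W] [Module R W] {i : M →ₗ[R] C} {p : C →ₗ[R] M}

theorem lifts_quotient (hC : (ModuleCat.of R C).IsCotorsion) (hi : Function.Injective i)
    (hexact : Function.Exact i p) {N V : Submodule R W} (hNV : N ≤ V) (hN : Lifts p (W ⧸ N))
    (hVN : Lifts p (Subquotient V N)) (hV : Module.IsFlat R (W ⧸ V)) : Lifts p (W ⧸ V) := fun f ↦ by
  obtain ⟨g, hg⟩ := hN (f ∘ₗ Submodule.factor hNV)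
  let j : Subquotient V N →ₗ[R] W ⧸ N := Submodule.mapQ _ _ V.subtype le_rfl
  have hg' (w : W) : p (g (N.mkQ w)) = f (V.mkQ w) := LinearMap.congr_fun hg (N.mkQ w)
  have range_le : LinearMap.range (g ∘ₗ j) ≤ LinearMap.range i := by
    rintro _ ⟨x, rfl⟩
    obtain ⟨v, rfl⟩ := Submodule.mkQ_surjective _ x
    refine (hexact _).1 ((hg' v).trans ?_)
    exact (congrArg f ((Submodule.Quotient.mk_eq_zero V).2 v.2)).trans f.map_zero
  obtain ⟨k, hk⟩ := exists_comp_eq_of_range_le hi range_le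
  obtain ⟨k', hk'⟩ := hVN k
  obtain ⟨h, hh⟩ := exists_extension_of_isCotorsion hC hV (k' ∘ₗ Submodule.mkQ _)
  let g' : W →ₗ[R] C := g ∘ₗ N.mkQ - i ∘ₗ p ∘ₗ h
  have g'_eq_zero : V ≤ LinearMap.ker g' := fun v hv ↦ sub_eq_zero.2 <| by
    let v' : Subquotient V N := Submodule.Quotient.mk ⟨v, hv⟩
    calc g (j v') = i (k v') := (LinearMap.congr_fun hk v').symm
      _ = i (p (k' v')) := by rw [← hk', LinearMap.comp_apply]
      _ = i (p (h v)) := congrArg (fun c ↦ i (p c)) (LinearMap.congr_fun hh ⟨v, hv⟩).symm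
  refine ⟨V.liftQ g' g'_eq_zero, Submodule.linearMap_qext _ (LinearMap.ext fun w ↦ ?_)⟩
  simpa [g', hexact.apply_apply_eq_zero] using hg' w

theorem exists_lift_extension (hC : (ModuleCat.of R C).IsCotorsion) {V : Submodule R W}
    (hV : IsFlatLifting p (W ⧸ V)) {f : W →ₗ[R] M} {g : V →ₗ[R] C} (hg : p ∘ₗ g = f ∘ₗ V.subtype) :
    ∃ g' : W →ₗ[R] C, g' ∘ₗ V.subtype = g ∧ p ∘ₗ g' = f := by
  obtain ⟨h, rfl⟩ := exists_extension_of_isCotorsion hC hV.flat g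
  obtain ⟨k, hk⟩ := hV.lifts <| V.liftQ (f - p ∘ₗ h) fun v hv ↦
    sub_eq_zero.2 (LinearMap.congr_fun hg ⟨v, hv⟩).symm
  refine ⟨h + k ∘ₗ V.mkQ, LinearMap.ext fun v ↦ ?_, LinearMap.ext fun w ↦ ?_⟩
  · have mk_v : (Submodule.Quotient.mk (v : W) : W ⧸ V) = 0 :=
      (Submodule.Quotient.mk_eq_zero V).2 v.2
    simp [mk_v]
  · have hkw : p (k (V.mkQ w)) = f w - p (h w) := LinearMap.congr_fun hk (V.mkQ w)
    exact (map_add p _ _).trans (by rw [LinearMap.comp_apply, hkw, add_sub_cancel])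

end Quotient

section Filtration

theorem scottContinuous_iff_exists_mem {α R W : Type*} [CompleteLattice α] [Ring R]
    [AddCommGroup W] [Module R W] {Z : α → Submodule R W} :
    ScottContinuous Z ↔ Monotone Z ∧ ∀ d : Set α, d.Nonempty → DirectedOn (· ≤ ·) d →
      ∀ x ∈ Z (sSup d), ∃ a ∈ d, x ∈ Z a := by
  constructor
  · refine fun hZ ↦ ⟨hZ.monotone, fun d hd hdir x hx ↦ ?_⟩
    rw [← (hZ hd hdir (isLUB_sSup d)).sSup_eq,
      Submodule.mem_sSup_of_directed (hd.image Z) (hdir.mono_comp hZ.monotone)] at hx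
    simpa using hx
  · rintro ⟨hZ, exists_mem⟩ d hd hdir a ha
    refine ⟨hZ.mem_upperBounds_image ha.1, fun V hV x hx ↦ ?_⟩
    obtain ⟨b, hb, hxb⟩ := exists_mem d hd hdir x (ha.sSup_eq.symm ▸ hx)
    exact hV ⟨b, hb, rfl⟩ hxb

theorem lowerSet_eq_top_or_Iio {ι : Type*} [LinearOrder ι] [WellFoundedLT ι] (I : LowerSet ι) :
    I = ⊤ ∨ ∃ γ, I = LowerSet.Iio γ := by
  refine I.lower.eq_univ_or_Iio.imp (fun h ↦ ?_) fun ⟨γ, h⟩ ↦ ⟨γ, ?_⟩ <;>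
    exact SetLike.coe_injective h

theorem sSup_mem_range_of_scottContinuous {α β : Type*} [CompleteLinearOrder α] [CompleteLattice β]
    {Z : α → β} (hZ : ScottContinuous Z) {c : Set β} (hc : c ⊆ Set.range Z) (hne : c.Nonempty) :
    sSup c ∈ Set.range Z := by
  obtain ⟨d, rfl⟩ := Set.subset_range_iff_exists_image_eq.1 hc
  exact ⟨sSup d, (hZ hne.of_image (.of_linearOrder d) (isLUB_sSup d)).sSup_eq.symm⟩

variable {R : Type u} [Ring R] {M C W : Type u} [AddCommGroup M] [Module R M] [AddCommGroup C]
  [Module R C] [AddCommGroup W] [Module R W] {p : C →ₗ[R] M}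

theorem exists_lift_extension_of_le (hC : (ModuleCat.of R C).IsCotorsion) {f : W →ₗ.[R] M}
    {g : W →ₗ.[R] C} (hg : p.compPMap g ≤ f) {U : Submodule R W} (hgU : g.domain ≤ U)
    (hUf : U ≤ f.domain) (hU : IsFlatLifting p (Subquotient U g.domain)) :
    ∃ g' : W →ₗ.[R] C, g ≤ g' ∧ g'.domain = U ∧ p.compPMap g' ≤ f := by
  let e := Submodule.submoduleOfEquivOfLe hgU
  obtain ⟨h, h_extends, h_lifts⟩ := exists_lift_extension hC hU
    (f := f.toFun ∘ₗ Submodule.inclusion hUf) (g := g.toFun ∘ₗ e.toLinearMap)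
    (LinearMap.ext fun v ↦ hg.2 (x := e v) rfl)
  refine ⟨⟨U, h⟩, ⟨hgU, ?_⟩, rfl, hUf, ?_⟩
  · rintro ⟨x, hx⟩ ⟨_, hxU⟩ rfl
    exact (LinearMap.congr_fun h_extends ⟨⟨x, hxU⟩, hx⟩).symm
  · rintro ⟨x, hx⟩ ⟨_, _⟩ rfl
    exact LinearMap.congr_fun h_lifts ⟨x, hx⟩

theorem exists_lift_of_isFlatLifting_steps (hC : (ModuleCat.of R C).IsCotorsion)
    {𝒞 : Set (Submodule R W)} (sSup_mem : ∀ c ⊆ 𝒞, c.Nonempty → sSup c ∈ 𝒞)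
    {f : W →ₗ.[R] M} (step : ∀ V ∈ 𝒞, V < f.domain →
      ∃ U ∈ 𝒞, V < U ∧ U ≤ f.domain ∧ IsFlatLifting p (Subquotient U V))
    {g₀ : W →ₗ.[R] C} (g₀_mem : g₀.domain ∈ 𝒞) (hg₀ : p.compPMap g₀ ≤ f) :
    ∃ g : W →ₗ.[R] C, g₀ ≤ g ∧ p.compPMap g = f := by
  let S : Set (W →ₗ.[R] C) := {g | g.domain ∈ 𝒞 ∧ p.compPMap g ≤ f}
  have chain_bound : ∀ c ⊆ S, IsChain (· ≤ ·) c → ∀ g ∈ c, ∃ ub ∈ S, ∀ g' ∈ c, g' ≤ ub := by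
    intro c hcS hc g hg
    have directed : DirectedOn (· ≤ ·) c := hc.directedOn
    refine ⟨LinearPMap.sSup c directed, ⟨?_, ?_, ?_⟩, fun _ ↦ LinearPMap.le_sSup directed⟩
    · exact sSup_mem _ (Set.image_subset_iff.2 fun g hg ↦ (hcS hg).1) ⟨_, g, hg, rfl⟩
    · exact sSup_le (Set.forall_mem_image.2 fun g hg ↦ (hcS hg).2.1)
    · rintro ⟨x, hx⟩ y hxy
      obtain ⟨g, hg, hxg⟩ := (LinearPMap.mem_domain_sSup_iff ⟨g, hg⟩ directed).1 hx
      exact (congrArg p (LinearPMap.sSup_apply directed hg ⟨x, hxg⟩)).trans ((hcS hg).2.2 hxy)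
  obtain ⟨g, hg₀g, ⟨hg𝒞, hgf⟩, maximal⟩ := zorn_le_nonempty₀ S chain_bound g₀ ⟨g₀_mem, hg₀⟩
  refine ⟨g, hg₀g, LinearPMap.eq_of_le_of_domain_eq hgf (by_contra fun hne ↦ ?_)⟩
  obtain ⟨U, hU𝒞, hgU, hUf, hU⟩ := step _ hg𝒞 (lt_of_le_of_ne hgf.1 hne)
  obtain ⟨g', hgg', rfl, hg'f⟩ := exists_lift_extension_of_le hC hgf hgU.le hUf hU
  exact hgU.not_ge (maximal ⟨hU𝒞, hg'f⟩ hgg').1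

theorem exists_eq_Iio_of_lt_top {ι β : Type*} [LinearOrder ι] [WellFoundedLT ι] [PartialOrder β]
    {Z : LowerSet ι → β} (hZ : ScottContinuous Z) {I : LowerSet ι} (hI : Z I < Z ⊤) :
    ∃ γ, Z I = Z (LowerSet.Iio γ) ∧ Z (LowerSet.Iio γ) < Z (LowerSet.Iic γ) := by
  let d : Set (LowerSet ι) := {J | Z J = Z I}
  have image_d : Z '' d = {Z I} := Set.Subset.antisymm
    (Set.image_subset_iff.2 fun _ ↦ id) (Set.singleton_subset_iff.2 ⟨I, rfl, rfl⟩)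
  have hd : Z (sSup d) = Z I := by
    have := hZ (d := d) ⟨I, rfl⟩ (.of_linearOrder d) (isLUB_sSup d)
    exact (image_d ▸ this).unique isLUB_singleton
  obtain hd_top | ⟨γ, hγ⟩ := lowerSet_eq_top_or_Iio (sSup d)
  · exact absurd (hd_top ▸ hd).symm hI.ne
  · have Iio_le_Iic : LowerSet.Iio γ ≤ LowerSet.Iic γ := Set.Iio_subset_Iic_self
    refine ⟨γ, (hγ ▸ hd).symm, (hZ.monotone Iio_le_Iic).lt_of_ne fun h ↦ ?_⟩
    have Iic_mem : LowerSet.Iic γ ∈ d := h.symm.trans (hγ ▸ hd)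
    exact lt_irrefl γ ((hγ ▸ le_sSup Iic_mem : LowerSet.Iic γ ≤ LowerSet.Iio γ) le_rfl)

theorem lifts_of_filtration {ι : Type*} [LinearOrder ι] [WellFoundedLT ι]
    (hC : (ModuleCat.of R C).IsCotorsion) {Z : LowerSet ι → Submodule R W} (hZ : ScottContinuous Z)
    (step : ∀ γ, IsFlatLifting p (Subquotient (Z (LowerSet.Iic γ)) (Z (LowerSet.Iio γ)))) :
    Lifts p (Subquotient (Z ⊤) (Z ⊥)) := fun f ↦ by
  let f' : W →ₗ.[R] M := ⟨Z ⊤, f ∘ₗ Submodule.mkQ _⟩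
  have zero_le : p.compPMap (⟨Z ⊥, 0⟩ : W →ₗ.[R] C) ≤ f' := by
    refine ⟨hZ.monotone bot_le, ?_⟩
    rintro ⟨x, hx⟩ ⟨_, hx'⟩ rfl
    have mk_x : Submodule.mkQ ((Z ⊥).submoduleOf (Z ⊤)) ⟨x, hx'⟩ = 0 :=
      (Submodule.Quotient.mk_eq_zero _).2 hx
    exact (map_zero p).trans ((congrArg f mk_x).trans f.map_zero).symm
  obtain ⟨g, ⟨_, hg₀⟩, hgf⟩ := exists_lift_of_isFlatLifting_steps hC
    (fun c hc hne ↦ sSup_mem_range_of_scottContinuous hZ hc hne) (f := f')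
    (fun _ ⟨I, hV⟩ hI ↦ by
      obtain ⟨γ, hIγ, hγ⟩ := exists_eq_Iio_of_lt_top hZ (I := I) (hV ▸ hI)
      rw [← hV, hIγ]
      exact ⟨_, ⟨LowerSet.Iic γ, rfl⟩, hγ, hZ.monotone le_top, step γ⟩) ⟨⊥, rfl⟩ zero_le
  obtain ⟨V, g⟩ := g
  obtain rfl : V = Z ⊤ := congrArg LinearPMap.domain hgf
  refine ⟨Submodule.liftQ _ g fun x hx ↦ (hg₀ (x := ⟨x, hx⟩) (y := x) rfl).symm, ?_⟩
  exact Submodule.linearMap_qext _ (LinearMap.ext fun x ↦ hgf.le.2 (x := x) rfl)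

end Filtration

section SumOn

variable {R P ι : Type*} [Ring R] [AddCommGroup P] [Module R P] [DecidableEq ι]
  {A : ι → Submodule R P} {I J : Set ι}

open scoped Classical in
/-- The sum of the coordinates with index in `I` of a finitely supported family of vectors. -/
noncomputable def sumOn (A : ι → Submodule R P) (I : Set ι) : (Π₀ i, A i) →ₗ[R] P :=
  DFinsupp.lsum ℕ fun i ↦ if i ∈ I then (A i).subtype else 0

theorem sumOn_single_of_mem {i : ι} (hi : i ∈ I) (x : A i) :
    sumOn A I (DFinsupp.single i x) = x := by
  rw [sumOn, DFinsupp.lsum_single, if_pos hi, Submodule.subtype_apply]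

theorem sumOn_single_of_notMem {i : ι} (hi : i ∉ I) (x : A i) :
    sumOn A I (DFinsupp.single i x) = 0 := by
  rw [sumOn, DFinsupp.lsum_single, if_neg hi, LinearMap.zero_apply]

theorem sumOn_mem {X : Submodule R P} {h : Π₀ i, A i} (hX : ∀ i ∈ I, (h i : P) ∈ X) :
    sumOn A I h ∈ X := by
  rw [sumOn, DFinsupp.lsum_apply_apply]
  refine dfinsuppSumAddHom_mem X _ _ fun i _ ↦ ?_
  by_cases hi : i ∈ I
  · simpa [hi] using hX i hi
  · simp [hi]

theorem sumOn_sub_sumOn (hIJ : I ⊆ J) : sumOn A J - sumOn A I = sumOn A (J \ I) := by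
  refine DFinsupp.lhom_ext fun i x ↦ ?_
  rw [LinearMap.sub_apply]
  by_cases hI : i ∈ I
  · rw [sumOn_single_of_mem hI, sumOn_single_of_mem (hIJ hI), sub_self,
      sumOn_single_of_notMem fun hi ↦ hi.2 hI]
  by_cases hJ : i ∈ J
  · rw [sumOn_single_of_mem hJ, sumOn_single_of_notMem hI, sub_zero,
      sumOn_single_of_mem (Set.mem_sdiff_of_mem hJ hI)]
  · rw [sumOn_single_of_notMem hJ, sumOn_single_of_notMem hI, sub_zero,
      sumOn_single_of_notMem fun hi ↦ hJ hi.1]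

theorem sumOn_singleton (i : ι) (h : Π₀ i, A i) : sumOn A {i} h = h i := by
  suffices hom_eq : sumOn A {i} = (A i).subtype ∘ₗ DFinsupp.lapply i from
    LinearMap.congr_fun hom_eq h
  refine DFinsupp.lhom_ext fun j x ↦ ?_
  obtain rfl | hij := eq_or_ne i j
  · simp [sumOn]
  · simp [sumOn, hij.symm, DFinsupp.single_eq_of_ne hij]

theorem sumOn_mem_iff_of_subset (hIJ : I ⊆ J) {X : Submodule R P} {h : Π₀ i, A i}
    (hX : ∀ i ∈ J, i ∉ I → (h i : P) ∈ X) : sumOn A J h ∈ X ↔ sumOn A I h ∈ X := by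
  have sub_mem : sumOn A J h - sumOn A I h ∈ X := by
    rw [← LinearMap.sub_apply, sumOn_sub_sumOn hIJ]
    exact sumOn_mem fun i hi ↦ hX i hi.1 hi.2
  rw [← sub_add_cancel (sumOn A J h) (sumOn A I h), X.add_mem_iff_right sub_mem]

end SumOn

section SumFiltration

theorem nonempty_dfinsupp_quotient_equiv {R ι : Type*} [Ring R] {A : ι → Type*}
    [∀ i, AddCommGroup (A i)] [∀ i, Module R (A i)] {B : ∀ i, Submodule R (A i)}
    {N : Submodule R (Π₀ i, A i)} (hN : ∀ {h}, h ∈ N ↔ ∀ i, h i ∈ B i) :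
    Nonempty (((Π₀ i, A i) ⧸ N) ≃ₗ[R] Π₀ i, A i ⧸ B i) := by
  let q := DFinsupp.mapRange.linearMap fun i ↦ (B i).mkQ
  have hq : Function.Surjective q :=
    (DFinsupp.mapRange_surjective _ fun _ ↦ map_zero _).2 fun i ↦ Submodule.mkQ_surjective _
  have ker_q : N = LinearMap.ker q := Submodule.ext fun h ↦ by
    simp [q, DFinsupp.ext_iff, LinearMap.mem_ker, hN]
  exact ⟨(Submodule.quotEquivOfEq _ _ ker_q).trans (q.quotKerEquivOfSurjective hq)⟩

theorem exists_mem_Iic_of_mem {R P ι : Type*} [Ring R] [AddCommGroup P] [Module R P]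
    [LinearOrder ι] {U : LowerSet ι → Submodule R P} (hU : ScottContinuous U) {I : LowerSet ι}
    (hI : (I : Set ι).Nonempty) {x : P} (hx : x ∈ U I) : ∃ i ∈ I, x ∈ U (LowerSet.Iic i) := by
  have sSup_eq : sSup (LowerSet.Iic '' (I : Set ι)) = I :=
    le_antisymm (sSup_le (Set.forall_mem_image.2 fun i hi ↦ LowerSet.Iic_le.2 hi)) fun i hi ↦
      LowerSet.mem_sSup_iff.2 ⟨_, ⟨i, hi, rfl⟩, le_rfl⟩
  obtain ⟨_, ⟨i, hi, rfl⟩, hx⟩ := (scottContinuous_iff_exists_mem.1 hU).2 _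
    (hI.image LowerSet.Iic) (.of_linearOrder _) x (sSup_eq.symm ▸ hx)
  exact ⟨i, hi, hx⟩

variable {R P ι : Type*} [Ring R] [AddCommGroup P] [Module R P] [LinearOrder ι]
  {U L : LowerSet ι → Submodule R P}

/-- The filtration of the kernel of `⨁ i, U (Iic i) → U ⊤ / L ⊤` whose `I`-th member consists of
the families with `i`-th coordinate in `L (Iic i)` for `i ∉ I` and with the sum of the coordinates
in `I` lying in `L I`. Its nonzero successive factors are the `U (Iio γ) / L (Iio γ)`. -/
noncomputable def sumFiltration (U L : LowerSet ι → Submodule R P) (I : LowerSet ι) :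
    Submodule R (Π₀ i, U (LowerSet.Iic i)) where
  carrier := {h | (∀ i ∉ I, (h i : P) ∈ L (LowerSet.Iic i)) ∧ sumOn _ (I : Set ι) h ∈ L I}
  zero_mem' := ⟨fun i _ ↦ zero_mem _, by simp⟩
  add_mem' hx hy := ⟨fun i hi ↦ add_mem (hx.1 i hi) (hy.1 i hi), by
    simpa using add_mem hx.2 hy.2⟩
  smul_mem' r _ hx := ⟨fun i hi ↦ Submodule.smul_mem _ r (hx.1 i hi), by
    simpa using Submodule.smul_mem _ r hx.2⟩

theorem monotone_sumFiltration (hL : Monotone L) : Monotone (sumFiltration U L) :=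
  fun _ _ hIJ _ ⟨mem_of_notMem, sum_mem⟩ ↦
    ⟨fun i hi ↦ mem_of_notMem i fun hiI ↦ hi (hIJ hiI),
      (sumOn_mem_iff_of_subset hIJ fun i hiJ hiI ↦
        hL (LowerSet.Iic_le.2 hiJ) (mem_of_notMem i hiI)).2 (hL hIJ sum_mem)⟩

theorem scottContinuous_sumFiltration (hL : ScottContinuous L) :
    ScottContinuous (sumFiltration U L) := by
  classical
  refine scottContinuous_iff_exists_mem.2 ⟨monotone_sumFiltration hL.monotone, ?_⟩
  rintro d hd hdir h ⟨mem_of_notMem, sum_mem⟩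
  obtain ⟨I, hI, sum_mem_I⟩ := (scottContinuous_iff_exists_mem.1 hL).2 d hd hdir _ sum_mem
  obtain ⟨J, hJ, support_le⟩ := DirectedOn.exists_mem_subset_of_finset_subset_biUnion hd
    (f := ((↑) : LowerSet ι → Set ι)) (s := h.support.filter (· ∈ sSup d)) hdir <| by
      rw [← LowerSet.coe_sSup]
      exact fun i hi ↦ (Finset.mem_filter.1 hi).2
  obtain ⟨K, hK, hIK, hJK⟩ := hdir I hI J hJ
  have apply_eq_zero : ∀ i ∈ sSup d, i ∉ K → h i = 0 := fun i hi hiK ↦ by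
    by_contra hne
    have mem_filter := Finset.mem_filter.2 ⟨DFinsupp.mem_support_iff.2 hne, hi⟩
    exact hiK (LowerSet.coe_subset_coe.2 hJK (support_le (Finset.mem_coe.2 mem_filter)))
  refine ⟨K, hK, fun i hiK ↦ ?_, ?_⟩
  · by_cases hi : i ∈ sSup d
    · rw [apply_eq_zero i hi hiK]
      exact zero_mem _
    · exact mem_of_notMem i hi
  · have K_subset : (K : Set ι) ⊆ (sSup d : LowerSet ι) := LowerSet.coe_subset_coe.2 (le_sSup hK)
    have sum_mem_K := hL.monotone hIK sum_mem_I
    refine (sumOn_mem_iff_of_subset K_subset fun i hi hiK ↦ ?_).1 sum_mem_K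
    rw [apply_eq_zero i hi hiK]
    exact zero_mem _

theorem mem_sumFiltration_Iio_iff (hL : Monotone L) {γ : ι}
    {h : Π₀ i, U (LowerSet.Iic i)} (hh : h ∈ sumFiltration U L (LowerSet.Iic γ)) :
    h ∈ sumFiltration U L (LowerSet.Iio γ) ↔ sumOn _ (Set.Iio γ) h ∈ L (LowerSet.Iio γ) := by
  refine ⟨And.right, fun sum_mem ↦ ⟨fun i hi ↦ ?_, sum_mem⟩⟩
  obtain rfl | hγi := eq_or_lt_of_le (not_lt.1 hi : γ ≤ i)
  · rw [← sumOn_singleton (A := fun i ↦ U (LowerSet.Iic i)), ← Set.Iic_sdiff_Iio_same,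
      ← sumOn_sub_sumOn Set.Iio_subset_Iic_self]
    have Iio_le_Iic : LowerSet.Iio γ ≤ LowerSet.Iic γ := Set.Iio_subset_Iic_self
    exact sub_mem hh.2 (hL Iio_le_Iic sum_mem)
  · exact hh.1 i hγi.not_ge

theorem map_sumOn_sumFiltration (hU : ScottContinuous U) {γ : ι} (hγ : (Set.Iio γ).Nonempty) :
    (sumFiltration U L (LowerSet.Iic γ)).map (sumOn _ (Set.Iio γ)) = U (LowerSet.Iio γ) := by
  refine le_antisymm ?_ fun x hx ↦ ?_
  · rintro _ ⟨h, -, rfl⟩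
    exact sumOn_mem fun i hi ↦ hU.monotone (LowerSet.Iic_le.2 hi) (h i).2
  · obtain ⟨i, hi, hxi⟩ := exists_mem_Iic_of_mem hU hγ hx
    have hi : i < γ := hi
    have hxγ : x ∈ U (LowerSet.Iic γ) := hU.monotone (LowerSet.Iic_le.2 hi.le) hxi
    refine ⟨DFinsupp.single i ⟨x, hxi⟩ - DFinsupp.single γ ⟨x, hxγ⟩, ⟨fun j hj ↦ ?_, ?_⟩, ?_⟩
    · have hγj : γ < j := not_le.1 hj
      simp [DFinsupp.single_eq_of_ne hγj.ne', DFinsupp.single_eq_of_ne (hi.trans hγj).ne']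
    · simp [sumOn_single_of_mem, hi.le]
    · rw [map_sub, sumOn_single_of_mem (Set.mem_Iio.2 hi),
        sumOn_single_of_notMem Set.self_notMem_Iio, sub_zero]

theorem nonempty_sumFiltration_equiv (hU : ScottContinuous U) (hL : Monotone L) {γ : ι}
    (hγ : (Set.Iio γ).Nonempty) :
    Nonempty (Subquotient (sumFiltration U L (LowerSet.Iic γ)) (sumFiltration U L (LowerSet.Iio γ))
      ≃ₗ[R] Subquotient (U (LowerSet.Iio γ)) (L (LowerSet.Iio γ))) :=
  nonempty_subquotient_equiv _ (map_sumOn_sumFiltration hU hγ) fun _ hh ↦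
    (mem_sumFiltration_Iio_iff hL hh).symm

theorem nonempty_quotient_sumFiltration_top_equiv [Nonempty ι] (hU : ScottContinuous U) :
    Nonempty (((Π₀ i, U (LowerSet.Iic i)) ⧸ sumFiltration U L ⊤) ≃ₗ[R]
      Subquotient (U ⊤) (L ⊤)) := by
  have range_le (h : Π₀ i, U (LowerSet.Iic i)) : sumOn _ Set.univ h ∈ U ⊤ :=
    sumOn_mem fun i _ ↦ hU.monotone le_top (h i).2
  let q : (Π₀ i, U (LowerSet.Iic i)) →ₗ[R] Subquotient (U ⊤) (L ⊤) :=
    Submodule.mkQ _ ∘ₗ (sumOn _ Set.univ).codRestrict _ range_le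
  have hq : Function.Surjective q := (Submodule.mkQ_surjective _).comp fun ⟨x, hx⟩ ↦ by
    obtain ⟨i, -, hxi⟩ := exists_mem_Iic_of_mem hU Set.univ_nonempty hx
    exact ⟨DFinsupp.single i ⟨x, hxi⟩, Subtype.ext (sumOn_single_of_mem (Set.mem_univ i) _)⟩
  have ker_q : sumFiltration U L ⊤ = LinearMap.ker q := Submodule.ext fun h ↦ by
    refine Iff.trans ?_ (Submodule.Quotient.mk_eq_zero _).symm
    exact ⟨And.right, fun sum_mem ↦ ⟨fun i hi ↦ absurd trivial hi, sum_mem⟩⟩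
  exact ⟨(Submodule.quotEquivOfEq _ _ ker_q).trans (q.quotKerEquivOfSurjective hq)⟩

theorem mem_sumFiltration_bot_iff {h : Π₀ i, U (LowerSet.Iic i)} :
    h ∈ sumFiltration U L ⊥ ↔ ∀ i, (h i : P) ∈ L (LowerSet.Iic i) :=
  ⟨fun hh i ↦ hh.1 i id, fun hh ↦ ⟨fun i _ ↦ hh i, sumOn_mem fun _ hi ↦ absurd hi id⟩⟩

theorem nonempty_quotient_sumFiltration_bot_equiv :
    Nonempty (((Π₀ i, U (LowerSet.Iic i)) ⧸ sumFiltration U L ⊥) ≃ₗ[R]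
      Π₀ i, Subquotient (U (LowerSet.Iic i)) (L (LowerSet.Iic i))) :=
  nonempty_dfinsupp_quotient_equiv mem_sumFiltration_bot_iff

end SumFiltration

section Chain

variable {R : Type u} [Ring R] {M C P ι : Type u} [AddCommGroup M] [Module R M] [AddCommGroup C]
  [Module R C] [AddCommGroup P] [Module R P] {i : M →ₗ[R] C} {p : C →ₗ[R] M}

theorem Lifts.dfinsupp {ι : Type*} {F : ι → Type*} [∀ i, AddCommGroup (F i)]
    [∀ i, Module R (F i)] (h : ∀ i, Lifts p (F i)) : Lifts p (Π₀ i, F i) := fun f ↦ by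
  classical
  choose g hg using fun i ↦ h i (f ∘ₗ DFinsupp.lsingle i)
  exact ⟨DFinsupp.lsum ℕ g, DFinsupp.lhom_ext fun i x ↦ by
    simpa using LinearMap.congr_fun (hg i) x⟩

theorem isFlatLifting_of_subsingleton {F : Type*} [AddCommGroup F] [Module R F] [Subsingleton F] :
    IsFlatLifting p F :=
  ⟨fun _ _ _ _ ↦ ⟨0, fun _ ↦ Fin.elim0, Fin.elim0, fun _ ↦ Subsingleton.elim _ _,
    fun j ↦ j.elim0⟩, fun _ ↦ ⟨0, LinearMap.ext fun x ↦ by simp [Subsingleton.elim x 0]⟩⟩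

variable [LinearOrder ι] {U L : LowerSet ι → Submodule R P}

theorem isFlatLifting_sumFiltration (hU : ScottContinuous U) (hL : Monotone L) {γ : ι}
    (h : IsFlatLifting p (Subquotient (U (LowerSet.Iio γ)) (L (LowerSet.Iio γ)))) :
    IsFlatLifting p (Subquotient (sumFiltration U L (LowerSet.Iic γ))
      (sumFiltration U L (LowerSet.Iio γ))) := by
  obtain hγ | hγ := (Set.Iio γ).eq_empty_or_nonempty
  · have le : sumFiltration U L (LowerSet.Iic γ) ≤ sumFiltration U L (LowerSet.Iio γ) :=
      fun h hh ↦ (mem_sumFiltration_Iio_iff hL hh).2 <| sumOn_mem <| by simp [hγ]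
    have : Subsingleton (Subquotient (sumFiltration U L (LowerSet.Iic γ)) _) :=
      Submodule.Quotient.subsingleton_iff.2 (Submodule.submoduleOf_eq_top.2 le)
    exact isFlatLifting_of_subsingleton
  · obtain ⟨e⟩ := nonempty_sumFiltration_equiv hU hL hγ
    exact h.congr e.symm

theorem lifts_of_chain [WellFoundedLT ι] [Nonempty ι] (hC : (ModuleCat.of R C).IsCotorsion)
    (hi : Function.Injective i) (hexact : Function.Exact i p)
    (hU : ScottContinuous U) (hL : ScottContinuous L)
    (hIic : ∀ γ, Lifts p (Subquotient (U (LowerSet.Iic γ)) (L (LowerSet.Iic γ))))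
    (hIio : ∀ γ, IsFlatLifting p (Subquotient (U (LowerSet.Iio γ)) (L (LowerSet.Iio γ))))
    (hflat : Module.IsFlat R (Subquotient (U ⊤) (L ⊤))) :
    Lifts p (Subquotient (U ⊤) (L ⊤)) := by
  obtain ⟨e⟩ := nonempty_quotient_sumFiltration_top_equiv (L := L) hU
  obtain ⟨e'⟩ := nonempty_quotient_sumFiltration_bot_equiv (U := U) (L := L)
  have lifts_top_bot : Lifts p (Subquotient (sumFiltration U L ⊤) (sumFiltration U L ⊥)) :=
    lifts_of_filtration hC (scottContinuous_sumFiltration hL) fun γ ↦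
      isFlatLifting_sumFiltration hU hL.monotone (hIio γ)
  exact (lifts_quotient hC hi hexact (monotone_sumFiltration hL.monotone bot_le)
    ((Lifts.dfinsupp hIic).congr e'.symm) lifts_top_bot (isFlat_congr hflat e.symm)).congr e

end Chain

section SupFinset

theorem isFlat_subquotient_iSup {R P α : Type*} [Ring R] [AddCommGroup P] [Module R P] [Preorder α]
    [IsDirectedOrder α] [Nonempty α] {U L : α → Submodule R P} (hU : Monotone U) (hL : Monotone L)
    (hflat : ∀ a, Module.IsFlat R (Subquotient (U a) (L a))) :
    Module.IsFlat R (Subquotient (⨆ a, U a) (⨆ a, L a)) := fun n r x hx ↦ by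
  classical
  choose u hu using fun i ↦ Submodule.mkQ_surjective _ (x i)
  have sum_mem : ∑ i, r i • (u i : P) ∈ ⨆ a, L a := by
    have mkQ_sum : ((⨆ a, L a).submoduleOf (⨆ a, U a)).mkQ (∑ i, r i • u i) = 0 := by
      simpa only [map_sum, map_smul, hu] using hx
    have := Submodule.mem_comap.1 ((Submodule.Quotient.mk_eq_zero _).1 mkQ_sum)
    simpa using this
  choose a ha using fun i ↦ (Submodule.mem_iSup_of_directed U hU.directed_le).1 (u i).2
  obtain ⟨b, hb⟩ := (Submodule.mem_iSup_of_directed L hL.directed_le).1 sum_mem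
  obtain ⟨c, hc⟩ := (insert b (Finset.univ.image a)).exists_le
  have mem_U (i : Fin n) : (u i : P) ∈ U c :=
    hU (hc _ (Finset.mem_insert_of_mem (Finset.mem_image_of_mem a (Finset.mem_univ i)))) (ha i)
  let x' (i : Fin n) : Subquotient (U c) (L c) := Submodule.Quotient.mk ⟨u i, mem_U i⟩
  have sum_x' : ∑ i, r i • x' i = 0 := by
    simp only [x', ← Submodule.mkQ_apply, ← map_smul, ← map_sum]
    refine (Submodule.Quotient.mk_eq_zero _).2 (Submodule.mem_comap.2 ?_)
    simpa using hL (hc b (Finset.mem_insert_self _ _)) hb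
  obtain ⟨m, s, y, hy, hs⟩ := hflat c n r x' sum_x'
  let j : Subquotient (U c) (L c) →ₗ[R] Subquotient (⨆ a, U a) (⨆ a, L a) :=
    Submodule.mapQ _ _ (Submodule.inclusion (le_iSup U c)) fun z hz ↦ le_iSup L c hz
  have j_x' (i : Fin n) : j (x' i) = x i := hu i
  exact ⟨m, s, j ∘ y, fun i ↦ by simpa [j_x'] using congrArg j (hy i), hs⟩

variable {R P X : Type*} [Ring R] [AddCommGroup P] [Module R P] {U L : Finset X → Submodule R P}

/-- The supremum of a family of submodules over the finite subsets of `T`. -/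
def supFinset (U : Finset X → Submodule R P) (T : Set X) : Submodule R P :=
  ⨆ S : {S : Finset X // (S : Set X) ⊆ T}, U S

instance (T : Set X) : Nonempty {S : Finset X // (S : Set X) ⊆ T} := ⟨∅, by simp⟩

instance (T : Set X) : IsDirectedOrder {S : Finset X // (S : Set X) ⊆ T} where
  directed S S' := by
    classical
    exact ⟨⟨S ∪ S', by simpa using ⟨S.2, S'.2⟩⟩, Finset.subset_union_left,
      Finset.subset_union_right⟩

theorem mem_supFinset (hU : Monotone U) {T : Set X} {x : P} :
    x ∈ supFinset U T ↔ ∃ S : Finset X, (S : Set X) ⊆ T ∧ x ∈ U S := by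
  rw [supFinset, Submodule.mem_iSup_of_directed
    (fun S : {S : Finset X // (S : Set X) ⊆ T} ↦ U S) (hU.comp (Subtype.mono_coe _)).directed_le]
  simp

theorem supFinset_coe (hU : Monotone U) (S : Finset X) : supFinset U S = U S :=
  le_antisymm (iSup_le fun S' ↦ hU (Finset.coe_subset.1 S'.2))
    (le_iSup (fun S' : {S' : Finset X // (S' : Set X) ⊆ S} ↦ U S') ⟨S, subset_rfl⟩)

theorem isFlat_subquotient_supFinset (hU : Monotone U) (hL : Monotone L)
    (hflat : ∀ S, Module.IsFlat R (Subquotient (U S) (L S))) (T : Set X) :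
    Module.IsFlat R (Subquotient (supFinset U T) (supFinset L T)) :=
  isFlat_subquotient_iSup (hU.comp (Subtype.mono_coe _)) (hL.comp (Subtype.mono_coe _))
    fun S ↦ hflat S

theorem scottContinuous_supFinset (hU : Monotone U) : ScottContinuous (supFinset U) := by
  refine scottContinuous_iff_exists_mem.2 ⟨fun T T' hT x ↦ ?_, fun d hd hdir x hx ↦ ?_⟩
  · rw [mem_supFinset hU, mem_supFinset hU]
    exact fun ⟨S, hS, hx⟩ ↦ ⟨S, hS.trans hT, hx⟩
  · obtain ⟨S, hS, hx⟩ := (mem_supFinset hU).1 hx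
    obtain ⟨T, hT, hST⟩ := DirectedOn.exists_mem_subset_of_finite_of_subset_sUnion hd hdir
      S.finite_toSet hS
    exact ⟨T, hT, (mem_supFinset hU).2 ⟨S, hST, hx⟩⟩

theorem scottContinuous_image_lowerSet {ι : Type*} [LE ι] (f : ι → X) :
    ScottContinuous fun I : LowerSet ι ↦ f '' I := fun d _ _ I hI ↦ by
  obtain rfl := hI.sSup_eq
  simp only [LowerSet.coe_sSup, Set.image_iUnion₂]
  exact isLUB_biSup

theorem isFlatLifting_supFinset {R : Type u} [Ring R] {M C P X : Type u} [AddCommGroup M]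
    [Module R M] [AddCommGroup C] [Module R C] [AddCommGroup P] [Module R P] {i : M →ₗ[R] C}
    {p : C →ₗ[R] M} (hC : (ModuleCat.of R C).IsCotorsion) (hi : Function.Injective i)
    (hexact : Function.Exact i p) {U L : Finset X → Submodule R P} (hU : Monotone U)
    (hL : Monotone L) (h : ∀ S, IsFlatLifting p (Subquotient (U S) (L S))) (T : Set X) :
    IsFlatLifting p (Subquotient (supFinset U T) (supFinset L T)) := by
  induction hκ : Cardinal.mk T using WellFoundedLT.induction generalizing T with
  | ind κ ih =>
  subst hκ
  have ih (T' : Set X) (hT' : Cardinal.mk T' < Cardinal.mk T) := ih _ hT' T' rfl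
  obtain hfin | hinf := T.finite_or_infinite
  · lift T to Finset X using hfin
    rw [supFinset_coe hU, supFinset_coe hL]
    exact h T
  have aleph0_le : Cardinal.aleph0 ≤ Cardinal.mk T := Cardinal.infinite_iff.1 hinf.to_subtype
  let ι := (Cardinal.mk T).ord.ToType
  obtain ⟨e⟩ : Nonempty (ι ≃ T) := Cardinal.eq.1 (Cardinal.mk_ord_toType _)
  have : Nonempty ι := e.nonempty_congr.2 hinf.nonempty.to_subtype
  let image (I : LowerSet ι) : Set X := (fun γ ↦ (e γ : X)) '' I
  have image_top : image ⊤ = T :=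
    (Set.image_univ.trans (e.surjective.range_comp Subtype.val)).trans Subtype.range_coe
  have mk_Iio (γ : ι) : Cardinal.mk (Set.Iio γ) < Cardinal.mk T := by
    simpa [ι] using Cardinal.mk_Iio_lt γ (by simp [ι])
  have mk_Iic (γ : ι) : Cardinal.mk (Set.Iic γ) < Cardinal.mk T := by
    rw [← Set.Iio_insert]
    exact Cardinal.mk_insert_le.trans_lt
      (Cardinal.add_lt_of_lt aleph0_le (mk_Iio γ) (Cardinal.one_lt_aleph0.trans_le aleph0_le))
  have scottContinuous {Z : Finset X → Submodule R P} (hZ : Monotone Z) :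
      ScottContinuous fun I ↦ supFinset Z (image I) :=
    (scottContinuous_image_lowerSet _).comp (scottContinuous_supFinset hZ)
  rw [← image_top]
  have flat := isFlat_subquotient_supFinset hU hL (fun S ↦ (h S).flat) (image ⊤)
  exact ⟨flat, lifts_of_chain (U := fun I ↦ supFinset U (image I))
    (L := fun I ↦ supFinset L (image I)) hC hi hexact (scottContinuous hU) (scottContinuous hL)
    (fun γ ↦ (ih _ (Cardinal.mk_image_le.trans_lt (mk_Iic γ))).lifts)
    (fun γ ↦ ih _ (Cardinal.mk_image_le.trans_lt (mk_Iio γ))) flat⟩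

end SupFinset

section Projective

variable {R : Type*} [Ring R]

theorem projective_quotient_range {A W : Type*} [AddCommGroup A] [Module R A] [AddCommGroup W]
    [Module R W] [Module.Projective R W] {δ : A →ₗ[R] W} {r : W →ₗ[R] A}
    (h : r ∘ₗ δ = LinearMap.id) : Module.Projective R (W ⧸ LinearMap.range δ) := by
  have range_le : LinearMap.range δ ≤ LinearMap.ker (LinearMap.id - δ ∘ₗ r) := by
    rintro _ ⟨x, rfl⟩
    simpa [sub_eq_zero] using (congrArg δ (LinearMap.congr_fun h x)).symm
  refine .of_split ((LinearMap.range δ).liftQ _ range_le) (LinearMap.range δ).mkQ ?_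
  refine Submodule.linearMap_qext _ (LinearMap.ext fun w ↦ ?_)
  simp

theorem isFlatLifting_of_projective {F M C : Type*} [AddCommGroup F] [Module R F]
    [AddCommGroup M] [Module R M] [AddCommGroup C] [Module R C] {p : C →ₗ[R] M}
    (hp : Function.Surjective p) [Module.Finite R F] [Module.Projective R F] :
    IsFlatLifting p F where
  flat := fun n r x hx ↦ by
    obtain ⟨m, f, g, -, -, hfg⟩ := Module.Finite.exists_comp_eq_id_of_projective R F
    refine ⟨m, fun i ↦ g (x i), fun j ↦ f (Pi.single j 1), fun i ↦ ?_, fun j ↦ ?_⟩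
    · calc x i = f (g (x i)) := (LinearMap.congr_fun hfg (x i)).symm
        _ = ∑ j, g (x i) j • f (Pi.single j 1) := by
          conv_lhs => rw [← Finset.univ_sum_single (g (x i)), map_sum]
          simp [← map_smul, ← Pi.single_smul]
    · simpa using congrFun (congrArg g hx) j
  lifts := fun f ↦ Module.projective_lifting_property p f hp

end Projective

section Flat

variable {R F : Type*} [Ring R] [AddCommGroup F] [Module R F]

theorem exists_factorization_of_apply_eq_zero (hF : Module.IsFlat R F) {n : ℕ}
    {f : (Fin n →₀ R) →ₗ[R] F} {l : Fin n →₀ R} (hl : f l = 0) :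
    ∃ (m : ℕ) (a : (Fin n →₀ R) →ₗ[R] Fin m →₀ R) (g : (Fin m →₀ R) →ₗ[R] F),
      g ∘ₗ a = f ∧ a l = 0 := by
  have sum_eq_zero : ∑ i, l i • f (Finsupp.single i 1) = 0 := by
    simpa [← map_smul, ← map_sum] using hl
  obtain ⟨m, a, y, hy, ha⟩ := hF n l _ sum_eq_zero
  refine ⟨m, Finsupp.linearCombination R fun i ↦ Finsupp.equivFunOnFinite.symm (a i),
    Finsupp.linearCombination R y, Finsupp.lhom_ext' fun i ↦ LinearMap.ext_ring ?_, ?_⟩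
  · have apply_a : Finsupp.linearCombination R y (Finsupp.equivFunOnFinite.symm (a i)) =
        ∑ j, a i j • y j := by
      simp [Finsupp.linearCombination_apply, Finsupp.sum_fintype]
    simp [apply_a, hy]
  · ext j
    simp [Finsupp.linearCombination_apply, Finsupp.sum_fintype, ha]

theorem exists_factorization_of_isFlat (hF : Module.IsFlat R F) {ι : Type*} [Finite ι]
    {f : (ι →₀ R) →ₗ[R] F} {t : Finset (ι →₀ R)} (ht : ∀ l ∈ t, f l = 0) :
    ∃ (m : ℕ) (a : (ι →₀ R) →ₗ[R] Fin m →₀ R) (g : (Fin m →₀ R) →ₗ[R] F),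
      g ∘ₗ a = f ∧ ∀ l ∈ t, a l = 0 := by
  classical
  induction t using Finset.induction_on with
  | empty =>
    obtain ⟨n, ⟨e⟩⟩ := Finite.exists_equiv_fin ι
    let e' : (ι →₀ R) ≃ₗ[R] Fin n →₀ R := Finsupp.domLCongr e
    exact ⟨n, e'.toLinearMap, f ∘ₗ e'.symm.toLinearMap, by ext; simp, by simp⟩
  | insert l t _ ih =>
    obtain ⟨m, a, g, rfl, ha⟩ := ih fun l' hl' ↦ ht l' (Finset.mem_insert_of_mem hl')
    obtain ⟨n, b, h, rfl, hb⟩ :=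
      exists_factorization_of_apply_eq_zero hF (ht l (Finset.mem_insert_self l t))
    refine ⟨n, b ∘ₗ a, h, rfl, fun l' hl' ↦ ?_⟩
    obtain rfl | hl' := Finset.mem_insert.1 hl'
    · exact hb
    · simp [ha l' hl']

end Flat

section Presentation

variable {R F M C X : Type*} [Ring R] [AddCommGroup F] [Module R F] [AddCommGroup M] [Module R M]
  [AddCommGroup C] [Module R C] {p : C →ₗ[R] M}

theorem isFlatLifting_subquotient_range {A W : Type*} [AddCommGroup A] [Module R A]
    [AddCommGroup W] [Module R W] (hp : Function.Surjective p) {U : Submodule R W}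
    [Module.Finite R U] [Module.Projective R U] {δ : A →ₗ[R] W} {r : W →ₗ[R] A}
    (h : r ∘ₗ δ = LinearMap.id) (hδ : LinearMap.range δ ≤ U) :
    IsFlatLifting p (Subquotient U (LinearMap.range δ)) := by
  let δ' : A →ₗ[R] U := δ.codRestrict U fun x ↦ hδ ⟨x, rfl⟩
  have range_δ' : LinearMap.range δ' = (LinearMap.range δ).submoduleOf U :=
    LinearMap.range_codRestrict _ _ _
  have : Module.Projective R (U ⧸ LinearMap.range δ') :=
    projective_quotient_range (r := r ∘ₗ U.subtype) (δ := δ') h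
  exact (isFlatLifting_of_projective hp).congr (Submodule.quotEquivOfEq _ _ range_δ')

section Finsupp

variable {s : Set X}

theorem lmapDomain_lsubtypeDomain {l : X →₀ R} (hl : l ∈ Finsupp.supported R R s) :
    Finsupp.lmapDomain R R ((↑) : s → X) (Finsupp.lsubtypeDomain (R := R) s l) = l := by
  classical
  have := Finsupp.extendDomain_subtypeDomain l (P := (· ∈ s)) fun x hx ↦ hl hx
  rwa [Finsupp.extendDomain_eq_embDomain_subtype, Finsupp.embDomain_eq_mapDomain] at this

theorem lsubtypeDomain_lmapDomain (l : s →₀ R) :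
    Finsupp.lsubtypeDomain (R := R) s (Finsupp.lmapDomain R R ((↑) : s → X) l) = l :=
  Finsupp.ext fun x ↦ Finsupp.mapDomain_apply Subtype.val_injective l x

theorem lsubtypeDomain_lmapDomain_eq_zero {ι : Type*} {z : ι → X} (hz : ∀ j, z j ∉ s)
    (l : ι →₀ R) : Finsupp.lsubtypeDomain (R := R) s (Finsupp.lmapDomain R R z l) = 0 :=
  Finsupp.ext fun x ↦ Finsupp.mapDomain_of_notMem_range l (x : X) fun ⟨j, hj⟩ ↦
    hz j (hj.symm ▸ x.2)

theorem lmapDomain_mem_supported {ι : Type*} {z : ι → X} (hz : ∀ j, z j ∈ s) (l : ι →₀ R) :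
    Finsupp.lmapDomain R R z l ∈ Finsupp.supported R R s := by
  classical
  refine (Finset.coe_subset.2 Finsupp.mapDomain_support).trans fun x hx ↦ ?_
  obtain ⟨j, -, rfl⟩ := Finset.mem_image.1 (Finset.mem_coe.1 hx)
  exact hz j

end Finsupp

variable {v : X → F}

-- Identifying each generator `x ∈ S` with its image under a factorization through `Fin m →₀ R`,
-- whose basis is realized by fresh generators outside `S`, imposes relations that imply those in
-- `t`. Restriction to the coordinates in `S` retracts these relations.
theorem exists_retraction_of_isFlat (hF : Module.IsFlat R F) (hv : ∀ y, (v ⁻¹' {y}).Infinite)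
    {S : Finset X} {t : Finset (X →₀ R)} (htS : ∀ l ∈ t, l ∈ Finsupp.supported R R (S : Set X))
    (htv : ∀ l ∈ t, Finsupp.linearCombination R v l = 0) :
    ∃ (S' : Finset X) (δ : ((S : Set X) →₀ R) →ₗ[R] X →₀ R)
      (r : (X →₀ R) →ₗ[R] (S : Set X) →₀ R), S ⊆ S' ∧ r ∘ₗ δ = LinearMap.id ∧
      LinearMap.range δ ≤ Finsupp.supported R R (S' : Set X) ∧
      LinearMap.range δ ≤ LinearMap.ker (Finsupp.linearCombination R v) ∧
      ∀ l ∈ t, l ∈ LinearMap.range δ := by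
  classical
  let incl : ((S : Set X) →₀ R) →ₗ[R] X →₀ R := Finsupp.lmapDomain R R (↑)
  let r : (X →₀ R) →ₗ[R] (S : Set X) →₀ R := Finsupp.lsubtypeDomain (S : Set X)
  have incl_r (l) (hl : l ∈ t) : incl (r l) = l := lmapDomain_lsubtypeDomain (htS l hl)
  have htr : ∀ l ∈ t.image r, (Finsupp.linearCombination R v ∘ₗ incl) l = 0 :=
    Finset.forall_mem_image.2 fun l hl ↦ by
      rw [LinearMap.comp_apply, incl_r l hl, htv l hl]
  obtain ⟨m, a, g, hga, ha⟩ := exists_factorization_of_isFlat hF htr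
  choose z hzv hzS using fun j ↦ (hv (g (Finsupp.single j 1))).exists_notMem_finset S
  let incl' : (Fin m →₀ R) →ₗ[R] X →₀ R := Finsupp.lmapDomain R R z
  have v_incl' : Finsupp.linearCombination R v ∘ₗ incl' = g := by
    ext j
    simpa [incl'] using hzv j
  refine ⟨S ∪ Finset.univ.image z, incl - incl' ∘ₗ a, r, Finset.subset_union_left, ?_, ?_, ?_, ?_⟩
  · have r_incl (l) : r (incl l) = l := lsubtypeDomain_lmapDomain l
    have r_incl' (l) : r (incl' l) = 0 := lsubtypeDomain_lmapDomain_eq_zero hzS l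
    exact LinearMap.ext fun l ↦ by simp [r_incl, r_incl']
  · rintro _ ⟨l, rfl⟩
    exact sub_mem (lmapDomain_mem_supported (fun x ↦ by simp) _)
      (lmapDomain_mem_supported (fun j ↦ by simp) _)
  · rintro _ ⟨l, rfl⟩
    have := LinearMap.congr_fun hga l
    rw [← v_incl'] at this
    simpa [sub_eq_zero] using this.symm
  · exact fun l hl ↦ ⟨r l, by simp [incl_r l hl, ha (r l) (Finset.mem_image_of_mem _ hl)]⟩

theorem exists_isFlatLifting (hp : Function.Surjective p) (hF : Module.IsFlat R F)
    (hv : ∀ y, (v ⁻¹' {y}).Infinite) (S : Finset X) {L : Submodule R (X →₀ R)} (hL : L.FG)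
    (hLv : L ≤ LinearMap.ker (Finsupp.linearCombination R v)) :
    ∃ (S' : Finset X) (L' : Submodule R (X →₀ R)), S ⊆ S' ∧ L ≤ L' ∧ L'.FG ∧
      L' ≤ LinearMap.ker (Finsupp.linearCombination R v) ∧
      IsFlatLifting p (Subquotient (Finsupp.supported R R (S' : Set X)) L') := by
  classical
  obtain ⟨t, rfl⟩ := hL
  have htS (l) (hl : l ∈ t) :
      l ∈ Finsupp.supported R R ((S ∪ t.biUnion Finsupp.support : Finset X) : Set X) :=
    Finset.coe_subset.2 ((Finset.subset_biUnion_of_mem _ hl).trans Finset.subset_union_right)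
  obtain ⟨S', δ, r, hS, hrδ, hδS, hδv, htδ⟩ :=
    exists_retraction_of_isFlat hF hv htS fun l hl ↦ hLv (Submodule.subset_span hl)
  let e : Finsupp.supported R R (S' : Set X) ≃ₗ[R] (S' : Set X) →₀ R :=
    Finsupp.supportedEquivFinsupp _
  have : Module.Projective R (Finsupp.supported R R (S' : Set X)) := .of_equiv e.symm
  have : Module.Finite R (Finsupp.supported R R (S' : Set X)) := .equiv e.symm
  have range_fg : (LinearMap.range δ).FG := by
    rw [LinearMap.range_eq_map]
    exact Module.Finite.fg_top.map δ
  exact ⟨S', LinearMap.range δ, Finset.subset_union_left.trans hS, Submodule.span_le.2 htδ,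
    range_fg, hδv, isFlatLifting_subquotient_range hp hrδ hδS⟩

end Presentation

theorem exists_monotone_forall_le {α β : Type*} [Preorder β] [IsDirectedOrder β] [Nonempty β]
    (b : α → β) : ∃ t : Finset α → β, Monotone t ∧ ∀ a, b a ≤ t {a} := by
  classical
  choose ub hub using Finset.exists_le (α := β)
  let t : Finset α → β := Finset.strongInduction fun S ih ↦
    ub (S.image b ∪ S.ssubsets.attach.image fun S' ↦ ih S'.1 (Finset.mem_ssubsets.1 S'.2))
  have t_eq (S) : t S = ub (S.image b ∪ S.ssubsets.attach.image fun S' ↦ t S'.1) :=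
    Finset.strongInduction_eq _ S
  refine ⟨t, fun S' S hS ↦ ?_, fun a ↦ ?_⟩
  · obtain rfl | hS := eq_or_ssubset_of_subset hS
    · exact le_rfl
    · rw [t_eq S]
      exact hub _ _ (Finset.mem_union_right _ (Finset.mem_image.2
        ⟨⟨S', Finset.mem_ssubsets.2 hS⟩, Finset.mem_attach _ _, rfl⟩))
  · rw [t_eq]
    exact hub _ _ (Finset.mem_union_left _ (by simp))

section Periodicity

variable {R : Type u} [Ring R] {M C : Type u} [AddCommGroup M] [Module R M] [AddCommGroup C]
  [Module R C] {i : M →ₗ[R] C} {p : C →ₗ[R] M}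

theorem exists_family_isFlatLifting {F X : Type*} [AddCommGroup F] [Module R F]
    (hp : Function.Surjective p) (hF : Module.IsFlat R F) {v : X → F}
    (hv : ∀ y, (v ⁻¹' {y}).Infinite) :
    ∃ U L : Finset (X →₀ R) → Submodule R (X →₀ R), Monotone U ∧ Monotone L ∧
      (∀ S, IsFlatLifting p (Subquotient (U S) (L S))) ∧ supFinset U Set.univ = ⊤ ∧
      supFinset L Set.univ = LinearMap.ker (Finsupp.linearCombination R v) := by
  classical
  let β := {q : Finset X × Submodule R (X →₀ R) // q.2.FG ∧
    q.2 ≤ LinearMap.ker (Finsupp.linearCombination R v) ∧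
    IsFlatLifting p (Subquotient (Finsupp.supported R R (q.1 : Set X)) q.2)}
  have exists_ge (S : Finset X) {L : Submodule R (X →₀ R)} (hL : L.FG)
      (hLv : L ≤ LinearMap.ker (Finsupp.linearCombination R v)) : ∃ q : β, (S, L) ≤ q.1 := by
    obtain ⟨S', L', hS, hL, hq⟩ := exists_isFlatLifting hp hF hv S hL hLv
    exact ⟨⟨(S', L'), hq⟩, hS, hL⟩
  have : Nonempty β := (exists_ge ∅ Submodule.fg_bot bot_le).nonempty
  have : IsDirectedOrder β := ⟨fun q q' ↦ by
    obtain ⟨q'', hq⟩ := exists_ge (q.1.1 ⊔ q'.1.1) (q.2.1.sup q'.2.1) (sup_le q.2.2.1 q'.2.2.1)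
    exact ⟨q'', (sup_le_iff (a := q.1) (b := q'.1)).1 hq⟩⟩
  have exists_mem (x : X →₀ R) : ∃ q : β, x.support ⊆ q.1.1 ∧
      (Finsupp.linearCombination R v x = 0 → x ∈ q.1.2) := by
    by_cases hx : Finsupp.linearCombination R v x = 0
    · obtain ⟨q, hq, hq'⟩ := exists_ge x.support (Submodule.fg_span_singleton x)
        ((Submodule.span_singleton_le_iff_mem ..).2 hx)
      exact ⟨q, hq, fun _ ↦ (Submodule.span_singleton_le_iff_mem ..).1 hq'⟩
    · obtain ⟨q, hq, -⟩ := exists_ge x.support Submodule.fg_bot bot_le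
      exact ⟨q, hq, fun h ↦ absurd h hx⟩
  choose b hbU hbL using exists_mem
  obtain ⟨t, ht, hbt⟩ := exists_monotone_forall_le b
  have mono_U : Monotone fun T ↦ Finsupp.supported R R ((t T).1.1 : Set X) :=
    fun T T' h ↦ Finsupp.supported_mono (Finset.coe_subset.2 (ht h).1)
  have mono_L : Monotone fun T ↦ (t T).1.2 := fun T T' h ↦ (ht h).2
  refine ⟨_, _, mono_U, mono_L, fun T ↦ (t T).2.2.2, ?_, le_antisymm ?_ fun x hx ↦ ?_⟩
  · exact eq_top_iff.2 fun x _ ↦ (mem_supFinset mono_U).2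
      ⟨{x}, Set.subset_univ _, Finset.coe_subset.2 ((hbU x).trans (hbt x).1)⟩
  · exact iSup_le fun T ↦ (t T).2.2.1
  · exact (mem_supFinset mono_L).2 ⟨{x}, Set.subset_univ _, (hbt x).2 (hbL x hx)⟩

theorem lifts_of_isFlat {F : Type u} [AddCommGroup F] [Module R F]
    (hC : (ModuleCat.of R C).IsCotorsion) (hi : Function.Injective i)
    (hp : Function.Surjective p) (hexact : Function.Exact i p) (hF : Module.IsFlat R F) :
    Lifts p F := by
  let v : F × ℕ → F := Prod.fst
  have infinite_fiber (y : F) : (v ⁻¹' {y}).Infinite :=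
    Set.infinite_of_injective_forall_mem (Prod.mk_right_injective y) fun _ ↦ rfl
  let π := Finsupp.linearCombination R v
  let π' := π ∘ₗ (⊤ : Submodule R (F × ℕ →₀ R)).subtype
  have hπ' : Function.Surjective π' :=
    (Finsupp.linearCombination_surjective R Prod.fst_surjective).comp
      Submodule.topEquiv.surjective
  obtain ⟨U, L, hU, hL, h, hU_top, hL_ker⟩ := exists_family_isFlatLifting hp hF infinite_fiber
  have lifts := (isFlatLifting_supFinset hC hi hexact hU hL h Set.univ).lifts
  rw [hU_top, hL_ker] at lifts
  have ker_π' : (LinearMap.ker π).submoduleOf ⊤ = LinearMap.ker π' := (LinearMap.ker_comp _ _).symm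
  exact lifts.congr
    ((Submodule.quotEquivOfEq _ _ ker_π').trans (π'.quotKerEquivOfSurjective hπ'))

theorem exists_extension_of_lifts {F U : Type*} [AddCommGroup F] [Module R F] [AddCommGroup U]
    [Module R U] (hi : Function.Injective i) (hexact : Function.Exact i p) (hF : Lifts p F)
    {q : U →ₗ[R] F} (hq : Function.Surjective q) {f : LinearMap.ker q →ₗ[R] M}
    (hf : ∃ h : U →ₗ[R] C, h ∘ₗ (LinearMap.ker q).subtype = i ∘ₗ f) :
    ∃ g : U →ₗ[R] M, g ∘ₗ (LinearMap.ker q).subtype = f := by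
  obtain ⟨h, hh⟩ := hf
  have h_apply (x : LinearMap.ker q) : h x = i (f x) := LinearMap.congr_fun hh x
  obtain ⟨k, hk⟩ := exists_comp_eq_of_ker_le hq (f := p ∘ₗ h) fun x hx ↦ by
    simpa [h_apply ⟨x, hx⟩] using hexact.apply_apply_eq_zero (f ⟨x, hx⟩)
  obtain ⟨k', rfl⟩ := hF k
  obtain ⟨g, hg⟩ := exists_comp_eq_of_range_le hi (f := h - k' ∘ₗ q) <| by
    rintro _ ⟨x, rfl⟩
    refine (hexact _).1 ?_
    simpa [sub_eq_zero] using (LinearMap.congr_fun hk x).symm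
  refine ⟨g, LinearMap.ext fun x ↦ hi ?_⟩
  simpa [h_apply] using LinearMap.congr_fun hg (x : U)

end Periodicity

end CotorsionPeriodicity

/-- **Cotorsion periodicity** (Bazzoni–Cortés-Izurdiaga–Estrada).  If
`0 → M → C → M → 0` is a short exact sequence of left `R`-modules and `C` is cotorsion,
then `M` is cotorsion. -/
theorem cotorsion_periodicity
    {R : Type u} [Ring R] (M C : ModuleCat.{u} R)
    (i : M ⟶ C) (p : C ⟶ M)
    (hi : Function.Injective i) (hp : Function.Surjective p)
    (hexact : Function.Exact i p)
    (hC : C.IsCotorsion) :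
    M.IsCotorsion := by
  intro F hF
  have lifts : CotorsionPeriodicity.Lifts p.hom F :=
    CotorsionPeriodicity.lifts_of_isFlat (i := i.hom) hC hi hp hexact hF
  refine CotorsionPeriodicity.subsingleton_extGroup_one_iff.2 fun q hq f ↦ ?_
  exact CotorsionPeriodicity.exists_extension_of_lifts (i := i.hom) hi hexact lifts hq
    (CotorsionPeriodicity.subsingleton_extGroup_one_iff.1 (hC F hF) q hq (i.hom ∘ₗ f))
end

section
/- Let R be an associative unital ring. Then every left R-module M can be included into a short exact sequence 0 → M → C → G → 0 of left R-modules in which C is cotorsion and G is flat. -/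
universe u

open CategoryTheory

/-!
Let `I` be the set of inclusions `K → F` with `F` a fixed free module and `F / K` flat. The small
object argument factors `M → 0` as `M → C → 0` with the second map right orthogonal to `I` and the
first map `i` left orthogonal to every map that is right orthogonal to `I`.

* Right orthogonality means that maps to `C` extend along every `K → F` in `I`. Every element of a
  flat module lies in a pure submodule of bounded size, so for `F` large enough a Zorn argument
  extends maps to `C` along all inclusions `A ≤ B` with `B / A` flat. Hence `Ext¹(-, C)` vanishes on
  flat modules.
* The map `i` is injective, since `E → 0` is right orthogonal to `I` for `E` injective. For a right
  ideal `J` of `R`, the character module `(R / J)⁺` also has the extension property with respect to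
  `I`, so the surjection `R⁺ → R⁺ / (R / J)⁺` is right orthogonal to `I`, and maps from `coker i`
  lift along it. Dually `Tor₁(R / J, coker i) = 0`, so `coker i` is flat.
-/

section Flat

variable {R : Type*} [Ring R] {B Q : Type*} [AddCommGroup B] [Module R B]
  [AddCommGroup Q] [Module R Q]

lemma isFlat_iff_of_surjective {π : B →ₗ[R] Q} (hπ : Function.Surjective π) :
    Module.IsFlat R Q ↔ ∀ (n : ℕ) (r : Fin n → R) (b : Fin n → B),
      ∑ i, r i • b i ∈ LinearMap.ker π →
        ∃ (m : ℕ) (a : Fin n → Fin m → R) (y : Fin m → B),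
          (∀ i, b i - ∑ j, a i j • y j ∈ LinearMap.ker π) ∧ ∀ j, ∑ i, r i * a i j = 0 := by
  simp only [LinearMap.mem_ker, map_sub, map_sum, map_smul, sub_eq_zero]
  constructor
  · intro h n r b hb
    obtain ⟨m, a, y, hy, ha⟩ := h n r (π ∘ b) hb
    obtain ⟨y, rfl⟩ := hπ.comp_left y
    exact ⟨m, a, y, hy, ha⟩
  · intro h n r x hx
    obtain ⟨b, rfl⟩ := hπ.comp_left x
    obtain ⟨m, a, y, hy, ha⟩ := h n r b hx
    exact ⟨m, a, π ∘ y, hy, ha⟩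

lemma isFlat_quotient_iff (A : Submodule R B) :
    Module.IsFlat R (B ⧸ A) ↔ ∀ (n : ℕ) (r : Fin n → R) (b : Fin n → B),
      ∑ i, r i • b i ∈ A →
        ∃ (m : ℕ) (a : Fin n → Fin m → R) (y : Fin m → B),
          (∀ i, b i - ∑ j, a i j • y j ∈ A) ∧ ∀ j, ∑ i, r i * a i j = 0 := by
  simpa only [A.ker_mkQ] using isFlat_iff_of_surjective A.mkQ_surjective

lemma isFlat_quotient_ker_iff {π : B →ₗ[R] Q} (hπ : Function.Surjective π) :
    Module.IsFlat R (B ⧸ LinearMap.ker π) ↔ Module.IsFlat R Q := by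
  rw [isFlat_quotient_iff, isFlat_iff_of_surjective hπ]

lemma isFlat_quotient_comap_iff {π : B →ₗ[R] Q} (hπ : Function.Surjective π) (S : Submodule R Q) :
    Module.IsFlat R (B ⧸ S.comap π) ↔ Module.IsFlat R (Q ⧸ S) := by
  have hker : LinearMap.ker (S.mkQ ∘ₗ π) = S.comap π := by rw [LinearMap.ker_comp, S.ker_mkQ]
  have hsurj : Function.Surjective (S.mkQ ∘ₗ π) := S.mkQ_surjective.comp hπ
  rw [← hker, isFlat_quotient_ker_iff hsurj]

lemma isFlat_quotient_sSup {s : Set (Submodule R B)} (hs : s.Nonempty)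
    (hdir : DirectedOn (· ≤ ·) s) (hflat : ∀ A ∈ s, Module.IsFlat R (B ⧸ A)) :
    Module.IsFlat R (B ⧸ sSup s) := by
  rw [isFlat_quotient_iff]
  intro n r b hb
  obtain ⟨A, hA, hbA⟩ := (Submodule.mem_sSup_of_directed hs hdir).1 hb
  obtain ⟨m, a, y, hy, ha⟩ := (isFlat_quotient_iff A).1 (hflat A hA) n r b hbA
  exact ⟨m, a, y, fun i => le_sSup hA (hy i), ha⟩

lemma isFlat_finsupp (X : Type*) : Module.IsFlat R (X →₀ R) := by
  classical
  intro n r p hp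
  let s : Finset X := Finset.univ.biUnion fun i => (p i).support
  let e : s ≃ Fin s.card := s.equivFin
  refine ⟨s.card, fun i j => p i (e.symm j), fun j => Finsupp.single (e.symm j : X) 1, ?_, ?_⟩
  · intro i
    have hsupp : (p i).support ⊆ s :=
      Finset.subset_biUnion_of_mem (fun i => (p i).support) (Finset.mem_univ i)
    calc p i = ∑ x ∈ s, Finsupp.single x (p i x) := by
          rw [← Finsupp.sum_of_support_subset _ hsupp _ (by simp), Finsupp.sum_single]
      _ = ∑ x : s, p i x • Finsupp.single (x : X) (1 : R) := by
          simp only [Finsupp.smul_single, smul_eq_mul, mul_one]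
          exact (Finset.sum_coe_sort s fun x => Finsupp.single x (p i x)).symm
      _ = _ := (e.symm.sum_comp _).symm
  · intro j
    simpa [Finsupp.finsetSum_apply] using DFunLike.congr_fun hp (e.symm j : X)

/-- The subgroup `I A` of a left module `A`, where `I = r₁ R + ⋯ + rₙ R` is the right ideal
generated by the row `r`. -/
def rowSMul {n : ℕ} (r : Fin n → R) (A : Type*) [AddCommGroup A] [Module R A] : AddSubgroup A :=
  (∑ i, (DistribSMul.toAddMonoidHom A (r i)).comp (Pi.evalAddMonoidHom (fun _ => A) i)).range

lemma mem_rowSMul {n : ℕ} {r : Fin n → R} {b : B} :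
    b ∈ rowSMul r B ↔ ∃ x : Fin n → B, ∑ i, r i • x i = b := by
  simp [rowSMul, AddMonoidHom.mem_range]

lemma mul_smul_mem_rowSMul {n : ℕ} (r : Fin n → R) (i : Fin n) (s : R) (b : B) :
    (r i * s) • b ∈ rowSMul r B := by
  classical
  refine mem_rowSMul.2 ⟨Pi.single i (s • b), ?_⟩
  rw [Fintype.sum_eq_single i fun j hj => by rw [Pi.single_eq_of_ne hj, smul_zero],
    Pi.single_eq_same, mul_smul]

lemma isFlat_quotient_iff_rowSMul (hB : Module.IsFlat R B) (A : Submodule R B) :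
    Module.IsFlat R (B ⧸ A) ↔
      ∀ (n : ℕ) (r : Fin n → R) (a : A), (a : B) ∈ rowSMul r B → a ∈ rowSMul r A := by
  rw [isFlat_quotient_iff]
  constructor
  · rintro h n r ⟨_, hb⟩ hrow
    obtain ⟨b, rfl⟩ := mem_rowSMul.1 hrow
    obtain ⟨m, a, y, hy, ha⟩ := h n r b hb
    have hzero : ∑ i, r i • ∑ j, a i j • y j = 0 := by
      simp only [Finset.smul_sum, smul_smul]
      rw [Finset.sum_comm]
      simp only [← Finset.sum_smul, ha, zero_smul, Finset.sum_const_zero]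
    refine mem_rowSMul.2 ⟨fun i => ⟨_, hy i⟩, Subtype.ext ?_⟩
    simp [smul_sub, hzero]
  · intro h n r b hb
    obtain ⟨c, hc⟩ := mem_rowSMul.1 (h n r ⟨_, hb⟩ (mem_rowSMul.2 ⟨b, rfl⟩))
    have hrel : ∑ i, r i • (b i - (c i : B)) = 0 := by
      simpa [smul_sub, sub_eq_zero] using congrArg Subtype.val hc.symm
    obtain ⟨m, a, y, hy, ha⟩ := hB n r _ hrel
    refine ⟨m, a, y, fun i => ?_, ha⟩
    rw [← hy i, sub_sub_cancel]
    exact (c i).2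

end Flat

section Pure

variable {R : Type*} [Ring R] {F : Type*} [AddCommGroup F] [Module R F]

/-- Purity in the sense of Cohn: a finite system of linear equations with constants in `S` that is
solvable in `F` is solvable in `S`. -/
def IsPureSubmodule (S : Submodule R F) : Prop :=
  ∀ (n m : ℕ) (a : Fin n → Fin m → R) (y : Fin m → F), (∀ i, ∑ j, a i j • y j ∈ S) →
    ∃ z : Fin m → S, ∀ i, ∑ j, a i j • (z j : F) = ∑ j, a i j • y j

lemma IsPureSubmodule.isFlat {S : Submodule R F} (hS : IsPureSubmodule S)
    (hF : Module.IsFlat R F) : Module.IsFlat R S := by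
  intro n r s hs
  obtain ⟨m, a, y, hy, ha⟩ := hF n r (fun i => (s i : F)) (by
    simpa using congrArg Subtype.val hs)
  obtain ⟨z, hz⟩ := hS n m a y fun i => hy i ▸ (s i).2
  refine ⟨m, a, z, fun i => Subtype.ext ?_, ha⟩
  simp [hy i, hz i]

lemma IsPureSubmodule.isFlat_quotient {S : Submodule R F} (hS : IsPureSubmodule S)
    (hF : Module.IsFlat R F) : Module.IsFlat R (F ⧸ S) := by
  refine (isFlat_quotient_iff_rowSMul hF S).2 fun n r s hs => ?_
  obtain ⟨y, hy⟩ := mem_rowSMul.1 hs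
  obtain ⟨z, hz⟩ := hS 1 n (fun _ => r) y fun _ => hy ▸ s.2
  refine mem_rowSMul.2 ⟨z, Subtype.ext ?_⟩
  simpa [hy] using hz 0

/-- Formal expressions naming the elements of the pure submodule generated by one element.
`solve a t j` stands for the `j`-th entry of a solution `y` of the system `a y = t`. -/
inductive PureTerm (R : Type*) : Type _
  | root : PureTerm R
  | add : PureTerm R → PureTerm R → PureTerm R
  | smul : R → PureTerm R → PureTerm R
  | solve {n m : ℕ} : (Fin n → Fin m → R) → (Fin n → PureTerm R) → Fin m → PureTerm R

/-- The value of an expression when the root is `x`; an unsolvable system receives an arbitrary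
value. -/
noncomputable def PureTerm.eval (x : F) : PureTerm R → F
  | .root => x
  | .add s t => s.eval x + t.eval x
  | .smul r t => r • t.eval x
  | .solve a t j =>
      Classical.epsilon (fun y : _ → F => ∀ i, ∑ k, a i k • y k = (t i).eval x) j

/-- A pure submodule containing `x` and of cardinality bounded independently of `F` and `x`: it is
enumerated by `PureTerm R`. -/
noncomputable def pureHull (R : Type*) [Ring R] {F : Type*} [AddCommGroup F] [Module R F] (x : F) :
    Submodule R F where
  carrier := Set.range (PureTerm.eval (R := R) x)
  add_mem' := by
    rintro _ _ ⟨s, rfl⟩ ⟨t, rfl⟩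
    exact ⟨.add s t, rfl⟩
  zero_mem' := ⟨.smul 0 .root, zero_smul R x⟩
  smul_mem' := by
    rintro r _ ⟨s, rfl⟩
    exact ⟨.smul r s, rfl⟩

lemma mem_pureHull_self (x : F) : x ∈ pureHull R x := ⟨.root, rfl⟩

lemma isPureSubmodule_pureHull (x : F) : IsPureSubmodule (pureHull R x) := by
  intro n m a y hy
  choose t ht using hy
  refine ⟨fun j => ⟨_, .solve a t j, rfl⟩, fun i => ?_⟩
  simp only [← ht, PureTerm.eval]
  exact Classical.epsilon_spec (p := fun y : Fin m → F => ∀ i, ∑ k, a i k • y k = (t i).eval x)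
    ⟨y, fun i => (ht i).symm⟩ i

end Pure

section Extension

variable {R : Type*} [Ring R] {ι A T Q C : Type*} [AddCommGroup A] [Module R A]
  [AddCommGroup T] [Module R T] [AddCommGroup Q] [Module R Q] [AddCommGroup C] [Module R C]

lemma exists_comp_eq_of_ker_le {π : A →ₗ[R] Q} (hπ : Function.Surjective π) (f : A →ₗ[R] C)
    (h : LinearMap.ker π ≤ LinearMap.ker f) : ∃ g : Q →ₗ[R] C, g ∘ₗ π = f := by
  refine ⟨(LinearMap.ker π).liftQ f h ∘ₗ (π.quotKerEquivOfSurjective hπ).symm.toLinearMap, ?_⟩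
  ext a
  have ha : (π.quotKerEquivOfSurjective hπ).symm (π a) = (LinearMap.ker π).mkQ a :=
    (LinearEquiv.symm_apply_eq _).2 rfl
  simp only [LinearMap.comp_apply, LinearEquiv.coe_coe, ha, Submodule.mkQ_apply,
    Submodule.liftQ_apply]

/-- `C` has the extension property with respect to the submodules of the free module on `ι` whose
quotient is flat, that is, `Ext¹(F, C) = 0` for every flat module `F` with a generating family
indexed by `ι`. -/
def FlatExtending (R : Type*) [Ring R] (ι : Type*) (C : Type*) [AddCommGroup C] [Module R C] :
    Prop :=
  ∀ K : Submodule R (ι →₀ R), Module.IsFlat R ((ι →₀ R) ⧸ K) →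
    ∀ f : K →ₗ[R] C, ∃ g : (ι →₀ R) →ₗ[R] C, g ∘ₗ K.subtype = f

lemma FlatExtending.exists_extension_of_exact (hC : FlatExtending R ι C) {j : A →ₗ[R] T}
    {q : T →ₗ[R] Q} (hj : Function.Injective j) (hq : Function.Surjective q)
    (hjq : Function.Exact j q) (hQ : Module.IsFlat R Q) {e : ι → Q}
    (he : Submodule.span R (Set.range e) = ⊤) (f : A →ₗ[R] C) :
    ∃ g : T →ₗ[R] C, g ∘ₗ j = f := by
  obtain ⟨l, rfl⟩ := hq.comp_left e
  let φ : (ι →₀ R) →ₗ[R] T := Finsupp.linearCombination R l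
  have hqφ : Function.Surjective (q ∘ₗ φ) := by
    rw [← LinearMap.range_eq_top, ← Finsupp.linearCombination_linear_comp,
      Finsupp.range_linearCombination, he]
  let K : Submodule R (ι →₀ R) := LinearMap.ker (q ∘ₗ φ)
  let φK : K →ₗ[R] A := (LinearEquiv.ofInjective j hj).symm ∘ₗ
    (φ ∘ₗ K.subtype).codRestrict (LinearMap.range j) fun k => (hjq (φ k)).1 k.2
  have hφK (k : K) : j (φK k) = φ k :=
    congrArg Subtype.val ((LinearEquiv.ofInjective j hj).apply_symm_apply _)
  obtain ⟨g₀, hg₀⟩ := hC K ((isFlat_quotient_ker_iff hqφ).2 hQ) (f ∘ₗ φK)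
  have hsurj : Function.Surjective (j.coprod φ) := by
    intro t
    obtain ⟨p, hp⟩ := hqφ (q t)
    obtain ⟨a, ha⟩ := (hjq (t - φ p)).1 (by
      rw [map_sub, sub_eq_zero]
      exact hp.symm)
    exact ⟨(a, p), by rw [LinearMap.coprod_apply, ha, sub_add_cancel]⟩
  obtain ⟨g, hg⟩ := exists_comp_eq_of_ker_le hsurj (f.coprod g₀) (by
    rintro ⟨a, p⟩ hap
    have hjp : φ p = j (-a) := by
      rw [map_neg]
      exact eq_neg_of_add_eq_zero_right hap
    have hp : p ∈ K := (hjq _).2 ⟨-a, hjp.symm⟩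
    have hpa : φK ⟨p, hp⟩ = -a := hj ((hφK _).trans hjp)
    have hgp : g₀ p = f (φK ⟨p, hp⟩) := LinearMap.congr_fun hg₀ ⟨p, hp⟩
    rw [LinearMap.mem_ker, LinearMap.coprod_apply, hgp, hpa, map_neg, add_neg_cancel])
  refine ⟨g, ?_⟩
  rw [← LinearMap.coprod_inl j φ, ← LinearMap.comp_assoc, hg, LinearMap.coprod_inl]

lemma FlatExtending.exists_le_mem_domain (hC : FlatExtending R (PureTerm R) C) (f : T →ₗ.[R] C)
    (hf : Module.IsFlat R (T ⧸ f.domain)) (x : T) :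
    ∃ f' : T →ₗ.[R] C, f ≤ f' ∧ Module.IsFlat R (T ⧸ f'.domain) ∧ x ∈ f'.domain := by
  let S : Submodule R (T ⧸ f.domain) := pureHull R (f.domain.mkQ x)
  let D : Submodule R T := S.comap f.domain.mkQ
  have hS : IsPureSubmodule S := isPureSubmodule_pureHull _
  have hfD : f.domain ≤ D := fun b hb => by
    rw [Submodule.mem_comap, Submodule.mkQ_apply, (Submodule.Quotient.mk_eq_zero _).2 hb]
    exact S.zero_mem
  let q : D →ₗ[R] S := f.domain.mkQ.restrict fun _ hb => hb
  have hq : Function.Surjective q := by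
    rintro ⟨s, hs⟩
    obtain ⟨b, rfl⟩ := f.domain.mkQ_surjective s
    exact ⟨⟨b, hs⟩, rfl⟩
  have hexact : Function.Exact (Submodule.inclusion hfD) q := by
    intro b
    rw [Subtype.ext_iff]
    refine (Submodule.Quotient.mk_eq_zero _).trans ⟨fun hb => ⟨⟨b, hb⟩, rfl⟩, ?_⟩
    rintro ⟨a, rfl⟩
    exact a.2
  have hspan : Submodule.span R
      (Set.range fun t : PureTerm R => (⟨t.eval (f.domain.mkQ x), t, rfl⟩ : S)) = ⊤ :=
    eq_top_iff.2 (by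
      rintro ⟨_, t, rfl⟩ -
      exact Submodule.subset_span ⟨t, rfl⟩)
  obtain ⟨g, hg⟩ := hC.exists_extension_of_exact (Submodule.inclusion_injective hfD) hq hexact
    (hS.isFlat hf) hspan f.toFun
  refine ⟨⟨D, g⟩, ⟨hfD, ?_⟩, ?_, mem_pureHull_self _⟩
  · rintro a b hab
    rw [← LinearPMap.toFun_eq_coe, ← hg]
    exact congrArg g (Subtype.ext hab)
  · exact (isFlat_quotient_comap_iff f.domain.mkQ_surjective S).2 (hS.isFlat_quotient hf)

lemma FlatExtending.exists_extension (hC : FlatExtending R (PureTerm R) C) (N : Submodule R T)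
    (hN : Module.IsFlat R (T ⧸ N)) (f : N →ₗ[R] C) : ∃ g : T →ₗ[R] C, g ∘ₗ N.subtype = f := by
  let P : Set (T →ₗ.[R] C) := {h | Module.IsFlat R (T ⧸ h.domain)}
  have hchains : ∀ c ⊆ P, IsChain (· ≤ ·) c → ∀ h ∈ c, ∃ ub ∈ P, ∀ h ∈ c, h ≤ ub := by
    intro c hc hchain h hh
    have hdir : DirectedOn (· ≤ ·) c := hchain.directedOn
    refine ⟨LinearPMap.sSup c hdir, ?_, fun _ => LinearPMap.le_sSup hdir⟩
    refine isFlat_quotient_sSup (Set.Nonempty.image _ ⟨h, hh⟩)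
      (directedOn_image.2 (hdir.mono fun _ _ h => h.1)) ?_
    rintro _ ⟨h, hh, rfl⟩
    exact hc hh
  obtain ⟨m, hfm, hm⟩ := zorn_le_nonempty₀ P hchains ⟨N, f⟩ hN
  have hdom (x : T) : x ∈ m.domain := by
    obtain ⟨f', hle, hflat, hx⟩ := hC.exists_le_mem_domain m hm.1 x
    exact (hm.2 hflat hle).1 hx
  refine ⟨m.toFun ∘ₗ LinearMap.id.codRestrict m.domain hdom, LinearMap.ext fun a => ?_⟩
  exact (hfm.2 (x := a) (y := ⟨a, hdom a⟩) rfl).symm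

end Extension

/-- The right multiplication of `R` on itself makes its character module a left `R`-module. -/
local instance instModuleCharacter {R : Type*} [Ring R] :
    Module R (CharacterModule R) where
  smul a φ := AddMonoidHom.comp φ (AddMonoidHom.mulRight a)
  one_smul φ := DFunLike.ext _ _ fun s => congrArg φ (mul_one s)
  mul_smul a b φ := DFunLike.ext _ _ fun s => congrArg φ (mul_assoc s a b).symm
  smul_zero _ := rfl
  smul_add _ _ _ := rfl
  add_smul a b φ := DFunLike.ext _ _ fun s =>
    (congrArg φ (mul_add s a b)).trans (map_add φ _ _)
  zero_smul φ := DFunLike.ext _ _ fun s => (congrArg φ (mul_zero s)).trans (map_zero φ)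

section Characters

variable {R : Type*} [Ring R] {n : ℕ} (r : Fin n → R) {A B : Type*}

lemma character_smul_apply (a : R) (φ : CharacterModule R) (s : R) : (a • φ) s = φ (s * a) := rfl

lemma exists_character_extension [AddCommGroup A] [AddCommGroup B] (j : A →+ B) {H : AddSubgroup B}
    (χ : CharacterModule A) (hχ : ∀ a, j a ∈ H → χ a = 0) :
    ∃ χ' : CharacterModule B, (∀ a, χ' (j a) = χ a) ∧ ∀ b ∈ H, χ' b = 0 := by
  let α : A →+ B ⧸ H := (QuotientAddGroup.mk' H).comp j
  have hker : α.ker ≤ AddMonoidHom.ker χ := fun a ha =>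
    hχ a ((QuotientAddGroup.eq_zero_iff (j a)).1 ha)
  obtain ⟨g, hg⟩ := (Module.Baer.of_divisible (AddCircle (1 : ℚ))).extension_property_addMonoidHom
    (QuotientAddGroup.kerLift α) (QuotientAddGroup.kerLift_injective α)
    (QuotientAddGroup.lift α.ker χ hker)
  refine ⟨g.comp (QuotientAddGroup.mk' H), fun a => ?_, fun b hb => ?_⟩
  · exact DFunLike.congr_fun hg (a : A ⧸ α.ker)
  · have hb₀ : QuotientAddGroup.mk' H b = 0 := (QuotientAddGroup.eq_zero_iff b).2 hb
    exact (congrArg g hb₀).trans (map_zero g)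

lemma exists_character_ne_zero_of_notMem [AddCommGroup A] {H : AddSubgroup A} {a : A}
    (ha : a ∉ H) : ∃ χ : CharacterModule A, (∀ h ∈ H, χ h = 0) ∧ χ a ≠ 0 := by
  have ha' : (QuotientAddGroup.mk' H) a ≠ 0 := fun h₀ => ha ((QuotientAddGroup.eq_zero_iff a).1 h₀)
  obtain ⟨χ, hχ⟩ := CharacterModule.exists_character_apply_ne_zero_of_ne_zero ha'
  refine ⟨AddMonoidHom.comp χ (QuotientAddGroup.mk' H), fun h hh => ?_, hχ⟩
  have hh₀ : QuotientAddGroup.mk' H h = 0 := (QuotientAddGroup.eq_zero_iff h).2 hh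
  exact (congrArg χ hh₀).trans (map_zero χ)

variable [AddCommGroup A] [Module R A] [AddCommGroup B] [Module R B]

/-- The adjunction between restriction to `ℤ` and coinduction, at `ℚ/ℤ`. -/
def characterEquiv (R : Type*) [Ring R] (A : Type*) [AddCommGroup A] [Module R A] :
    CharacterModule A ≃ (A →ₗ[R] CharacterModule R) where
  toFun χ :=
    { toFun a := AddMonoidHom.comp χ ((smulAddHom R A).flip a)
      map_add' a b := DFunLike.ext _ _ fun s =>
        (congrArg χ (smul_add s a b)).trans (map_add χ _ _)
      map_smul' c a := DFunLike.ext _ _ fun s => congrArg χ (mul_smul s c a).symm }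
  invFun f := (AddMonoidHom.eval (1 : R)).comp f.toAddMonoidHom
  left_inv χ := DFunLike.ext _ _ fun a => congrArg χ (one_smul R a)
  right_inv f := by
    refine LinearMap.ext fun a => DFunLike.ext _ _ fun s => ?_
    calc f (s • a) 1 = f a (1 * s) := DFunLike.congr_fun (map_smul f s a) 1
      _ = f a s := by rw [one_mul]

lemma characterEquiv_apply (χ : CharacterModule A) (a : A) (s : R) :
    characterEquiv R A χ a s = χ (s • a) := rfl

/-- The characters of `R` vanishing on the right ideal `I = r₁ R + ⋯ + rₙ R`, that is, the
character module of `R ⧸ I`. -/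
def rowAnnihilator : Submodule R (CharacterModule R) where
  carrier := {φ | ∀ i s, φ (r i * s) = 0}
  add_mem' {φ ψ} hφ hψ i s :=
    (congrArg₂ (· + ·) (hφ i s) (hψ i s)).trans (add_zero 0)
  zero_mem' _ _ := rfl
  smul_mem' a φ hφ i s := by
    rw [character_smul_apply, mul_assoc]
    exact hφ i (s * a)

lemma characterEquiv_mem_rowAnnihilator (χ : CharacterModule A) :
    (∀ a, characterEquiv R A χ a ∈ rowAnnihilator r) ↔ ∀ x ∈ rowSMul r A, χ x = 0 := by
  constructor
  · rintro h x hx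
    obtain ⟨a, rfl⟩ := mem_rowSMul.1 hx
    rw [map_sum]
    refine Finset.sum_eq_zero fun i _ => ?_
    simpa [characterEquiv_apply] using h (a i) i 1
  · intro h a i s
    exact h _ (mul_smul_mem_rowSMul r i s a)

lemma flatExtending_rowAnnihilator (ι : Type*) : FlatExtending R ι (rowAnnihilator r) := by
  intro K hK f
  let f' : K →ₗ[R] CharacterModule R := (rowAnnihilator r).subtype ∘ₗ f
  let χ : CharacterModule K := (characterEquiv R K).symm f'
  have hf' : characterEquiv R K χ = f' := Equiv.apply_symm_apply _ _
  have hχ : ∀ x ∈ rowSMul r K, χ x = 0 :=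
    (characterEquiv_mem_rowAnnihilator r χ).1 fun k => hf' ▸ (f k).2
  have hK' := (isFlat_quotient_iff_rowSMul (isFlat_finsupp ι) K).1 hK
  obtain ⟨χ', hχ'K, hχ'⟩ := exists_character_extension K.subtype.toAddMonoidHom χ
    fun k hk => hχ k (hK' n r k hk)
  refine ⟨(characterEquiv R _ χ').codRestrict _
    ((characterEquiv_mem_rowAnnihilator r χ').2 hχ'), LinearMap.ext fun k => Subtype.ext ?_⟩
  refine DFunLike.ext _ _ fun s => (hχ'K (s • k)).trans ?_
  exact DFunLike.congr_fun (LinearMap.congr_fun hf' k) s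

lemma exists_extension_character (N : Submodule R B) (f : N →ₗ[R] CharacterModule R) :
    ∃ g : B →ₗ[R] CharacterModule R, g ∘ₗ N.subtype = f := by
  obtain ⟨χ, rfl⟩ := (characterEquiv R N).surjective f
  obtain ⟨χ', hχ', -⟩ := exists_character_extension N.subtype.toAddMonoidHom (H := ⊥) χ
    fun a ha => by
      have ha₀ : a = 0 := Subtype.ext (AddSubgroup.mem_bot.1 ha)
      rw [ha₀, map_zero]
  exact ⟨characterEquiv R B χ', LinearMap.ext fun a => DFunLike.ext _ _ fun s => hχ' (s • a)⟩

/- If `I F ∩ K ≠ I K` for a free presentation `0 → K → F → B → 0`, a character of `K / I K` that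
does not vanish on the intersection corresponds to a map `K → (R / I)⁺` which does not extend to
`F`. It extends to a map `F → R⁺`, whence a map `B → R⁺ / (R / I)⁺` which cannot be lifted. -/
lemma isFlat_of_forall_lift
    (h : ∀ (n : ℕ) (r : Fin n → R) (v : B →ₗ[R] CharacterModule R ⧸ rowAnnihilator r),
      ∃ w : B →ₗ[R] CharacterModule R, (rowAnnihilator r).mkQ ∘ₗ w = v) :
    Module.IsFlat R B := by
  let π : (B →₀ R) →ₗ[R] B := Finsupp.linearCombination R id
  have hπ : Function.Surjective π := Finsupp.linearCombination_id_surjective R B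
  rw [← isFlat_quotient_ker_iff hπ, isFlat_quotient_iff_rowSMul (isFlat_finsupp B)]
  intro n r k hk
  by_contra hkK
  obtain ⟨χ, hχ, hχk⟩ := exists_character_ne_zero_of_notMem hkK
  obtain ⟨g, hg⟩ := exists_extension_character (LinearMap.ker π) (characterEquiv R _ χ)
  replace hg (a : LinearMap.ker π) : g a = characterEquiv R _ χ a := LinearMap.congr_fun hg a
  obtain ⟨v, hv⟩ := exists_comp_eq_of_ker_le hπ ((rowAnnihilator r).mkQ ∘ₗ g) fun a ha => by
    rw [LinearMap.ker_comp, Submodule.ker_mkQ, Submodule.mem_comap, hg ⟨a, ha⟩]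
    exact (characterEquiv_mem_rowAnnihilator r χ).2 hχ _
  obtain ⟨w, hw⟩ := h n r v
  let ψ : CharacterModule (B →₀ R) := (characterEquiv R _).symm (g - w ∘ₗ π)
  have hψ : ∀ x ∈ rowSMul r (B →₀ R), ψ x = 0 := by
    refine (characterEquiv_mem_rowAnnihilator r ψ).1 fun p => ?_
    rw [Equiv.apply_symm_apply, ← Submodule.ker_mkQ (rowAnnihilator r), LinearMap.mem_ker,
      LinearMap.sub_apply, map_sub, sub_eq_zero]
    exact (LinearMap.congr_fun hv p).symm.trans (LinearMap.congr_fun hw (π p)).symm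
  have hψk : (g - w ∘ₗ π) k 1 = 0 := hψ k hk
  rw [LinearMap.sub_apply, LinearMap.comp_apply, LinearMap.mem_ker.1 k.2, map_zero, sub_zero,
    hg, characterEquiv_apply, one_smul] at hψk
  exact hχk hψk

end Characters

section Ext

variable {R : Type u} [Ring R] {F C : ModuleCat.{u} R} (P : ProjectiveResolution F)

lemma range_d_eq_ker_π :
    LinearMap.range (P.complex.d 1 0).hom = LinearMap.ker (P.π.f 0).hom := by
  ext y
  exact ((ShortComplex.ShortExact.moduleCat_exact_iff_function_exact _).1 P.exact₀ y).symm

lemma ker_d_le_ker_of_comp_eq_zero {x : P.complex.X 1 ⟶ C} (hx : P.complex.d 2 1 ≫ x = 0) :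
    LinearMap.ker (P.complex.d 1 0).hom ≤ LinearMap.ker x.hom := by
  intro y hy
  obtain ⟨z, rfl⟩ := (ShortComplex.moduleCat_exact_iff _).1 (P.exact_succ 0) y hy
  exact ConcreteCategory.congr_hom hx z

lemma exists_d_comp_eq
    (hext : ∀ f : LinearMap.ker (P.π.f 0).hom →ₗ[R] C,
      ∃ g : P.complex.X 0 →ₗ[R] C, g ∘ₗ (LinearMap.ker (P.π.f 0).hom).subtype = f)
    {x : P.complex.X 1 ⟶ C} (hx : P.complex.d 2 1 ≫ x = 0) :
    ∃ g : P.complex.X 0 ⟶ C, P.complex.d 1 0 ≫ g = x := by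
  rw [← range_d_eq_ker_π] at hext
  obtain ⟨f, hf⟩ := exists_comp_eq_of_ker_le (P.complex.d 1 0).hom.surjective_rangeRestrict x.hom
    (by simpa only [LinearMap.ker_rangeRestrict] using ker_d_le_ker_of_comp_eq_zero P hx)
  obtain ⟨g, rfl⟩ := hext f
  exact ⟨ModuleCat.ofHom g, ModuleCat.hom_ext hf⟩

lemma subsingleton_extGroup_one
    (hext : ∀ f : LinearMap.ker (P.π.f 0).hom →ₗ[R] C,
      ∃ g : P.complex.X 0 →ₗ[R] C, g ∘ₗ (LinearMap.ker (P.π.f 0).hom).subtype = f) :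
    Subsingleton (F.extGroup C 1) := by
  have hexact : (P.complex.linearYonedaObj ℤ C).ExactAt 1 := by
    rw [HomologicalComplex.exactAt_iff' _ 0 1 2 (by simp) (by simp),
      ShortComplex.moduleCat_exact_iff]
    exact fun _ hx => exists_d_comp_eq P hext hx
  exact ModuleCat.subsingleton_of_isZero
    (((HomologicalComplex.exactAt_iff_isZero_homology _ _).1 hexact).of_iso (P.isoExt (R := ℤ) 1 C))

lemma isCotorsion_of_flatExtending (hC : FlatExtending R (PureTerm R) C) : C.IsCotorsion := by
  intro F hF
  let P := projectiveResolution F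
  have hπ : Function.Surjective (P.π.f 0).hom :=
    (ModuleCat.epi_iff_surjective (P.π.f 0)).1 inferInstance
  exact subsingleton_extGroup_one P (hC.exists_extension _ ((isFlat_quotient_ker_iff hπ).2 hF))

end Ext

section SmallObject

open Limits MorphismProperty ZeroObject

lemma hasSmallObjectArgument_of_le_monomorphisms {C : Type*} [Category* C] [Abelian C]
    [IsGrothendieckAbelian.{u} C] {I : MorphismProperty C} [MorphismProperty.IsSmall.{u} I]
    (hI : I ≤ monomorphisms C) : HasSmallObjectArgument.{u} I := by
  obtain ⟨κ, hκ', hκ⟩ := HasCardinalLT.exists_regular_cardinal_forall.{u}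
    fun i : I.toSet => Subobject i.1.left
  have : Fact κ.IsRegular := ⟨hκ'⟩
  have : Nonempty κ.ord.ToType := by simpa using hκ'.ne_zero
  have := WellFoundedLT.toOrderBot κ.ord.ToType
  have hmono : (coproducts.{u} (ofHoms I.homFamily)).pushouts ≤ monomorphisms C := by
    simpa only [ofHoms_homFamily, pushouts_le_iff, coproducts_le_iff] using hI
  refine ⟨κ, inferInstance, inferInstance, { preservesColimit {A B X Y} i hi f hf := ?_ }⟩
  have (j j' : κ.ord.ToType) (φ : j ⟶ j') : Mono (hf.F.map φ) :=
    (hf.transfiniteCompositionOfShape.ofLE hmono).mem_map φ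
  exact IsGrothendieckAbelian.preservesColimit_coyoneda_obj_of_mono (Y := hf.F) (κ := κ)
    (hκ ⟨Arrow.mk i, hi⟩)

lemma mono_of_llp_rlp {C : Type*} [Category* C] [Abelian C] [EnoughInjectives C]
    {I : MorphismProperty C} (hI : I ≤ monomorphisms C) {X Y : C} {i : X ⟶ Y} (hi : I.rlp.llp i) :
    Mono i := by
  have hp : I.rlp (0 : Injective.under X ⟶ 0) :=
    antitone_rlp hI _ ((injective_iff_rlp_monomorphisms_zero _).1 inferInstance)
  have := hi _ hp
  have sq : CommSq (Injective.ι X) i (0 : Injective.under X ⟶ 0) 0 := ⟨by simp⟩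
  exact mono_of_mono_fac sq.fac_left

variable (R : Type u) [Ring R] (ι : Type u)

/-- The inclusions into the free module on `ι` of its submodules with flat quotient. -/
def flatInclusions : MorphismProperty (ModuleCat.{u} R) :=
  ofHoms fun K : {K : Submodule R (ι →₀ R) // Module.IsFlat R ((ι →₀ R) ⧸ K)} =>
    ModuleCat.ofHom (X := K.1) (Y := ι →₀ R) K.1.subtype

lemma flatInclusions_le_monomorphisms : flatInclusions R ι ≤ monomorphisms (ModuleCat.{u} R) := by
  rintro _ _ _ ⟨K⟩
  exact (ModuleCat.mono_iff_injective _).2 Subtype.val_injective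

instance : MorphismProperty.IsSmall.{u} (flatInclusions R ι) := by
  dsimp only [flatInclusions]
  infer_instance

instance : HasSmallObjectArgument.{u} (flatInclusions R ι) :=
  hasSmallObjectArgument_of_le_monomorphisms (flatInclusions_le_monomorphisms R ι)

variable {R ι}

lemma flatInclusions_subtype {K : Submodule R (ι →₀ R)} (hK : Module.IsFlat R ((ι →₀ R) ⧸ K)) :
    flatInclusions R ι (ModuleCat.ofHom (X := K) (Y := ι →₀ R) K.subtype) :=
  ⟨(⟨K, hK⟩ : {K : Submodule R (ι →₀ R) // Module.IsFlat R ((ι →₀ R) ⧸ K)})⟩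

lemma flatExtending_of_rlp_zero {C Z : ModuleCat.{u} R} {p : C ⟶ Z} (hZ : IsZero Z)
    (hp : (flatInclusions R ι).rlp p) : FlatExtending R ι C := by
  intro K hK f
  let j : ModuleCat.of.{u} R K ⟶ ModuleCat.of.{u} R (ι →₀ R) := ModuleCat.ofHom K.subtype
  have := hp j (flatInclusions_subtype hK)
  have sq : CommSq (ModuleCat.ofHom f) j p 0 := ⟨hZ.eq_of_tgt _ _⟩
  exact ⟨sq.lift.hom, congrArg ModuleCat.Hom.hom sq.fac_left⟩

lemma flatInclusions_rlp_mkQ {E : Type u} [AddCommGroup E] [Module R E] {N : Submodule R E}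
    (hN : FlatExtending R ι N) : (flatInclusions R ι).rlp (ModuleCat.ofHom N.mkQ) := by
  rintro _ _ _ ⟨K, hK⟩
  refine ⟨fun {u v} sq => ?_⟩
  obtain ⟨l, hl⟩ := Module.projective_lifting_property N.mkQ v.hom N.mkQ_surjective
  have hmem (k : K) : u.hom k - l k ∈ N := by
    rw [← N.ker_mkQ, LinearMap.mem_ker, map_sub, sub_eq_zero]
    exact (ConcreteCategory.congr_hom sq.w k).trans (LinearMap.congr_fun hl k).symm
  obtain ⟨g, hg⟩ := hN K hK ((u.hom - l ∘ₗ K.subtype).codRestrict N hmem)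
  refine ⟨⟨⟨ModuleCat.ofHom (l + N.subtype ∘ₗ g), ?_, ?_⟩⟩⟩
  · refine ModuleCat.hom_ext (LinearMap.ext fun k => ?_)
    have hgk : (g (k : ι →₀ R) : E) = u.hom k - l k :=
      congrArg Subtype.val (LinearMap.congr_fun hg k)
    exact (congrArg (l k + ·) hgk).trans (add_sub_cancel _ _)
  · refine ModuleCat.hom_ext (LinearMap.ext fun b => ?_)
    have hgb : N.mkQ (g b) = 0 := (Submodule.Quotient.mk_eq_zero N).2 (g b).2
    change N.mkQ (l b + g b) = v.hom b
    rw [map_add, hgb, add_zero]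
    exact LinearMap.congr_fun hl b

lemma isFlat_quotient_range_of_llp_rlp {M C : ModuleCat.{u} R} {i : M ⟶ C}
    (hi : (flatInclusions R ι).rlp.llp i) : Module.IsFlat R (C ⧸ LinearMap.range i.hom) := by
  refine isFlat_of_forall_lift fun n r v => ?_
  let I : Submodule R C := LinearMap.range i.hom
  have hq := flatInclusions_rlp_mkQ (flatExtending_rowAnnihilator r ι)
  have := hi _ hq
  have sq : CommSq (0 : M ⟶ ModuleCat.of R (CharacterModule R)) i
      (ModuleCat.ofHom (rowAnnihilator r).mkQ) (ModuleCat.ofHom (v ∘ₗ I.mkQ)) := ⟨by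
    rw [Limits.zero_comp]
    refine ModuleCat.hom_ext (Eq.symm ?_)
    change v ∘ₗ I.mkQ ∘ₗ i.hom = 0
    rw [LinearMap.range_mkQ_comp, LinearMap.comp_zero]⟩
  have hw : I ≤ LinearMap.ker sq.lift.hom := by
    rintro _ ⟨m, rfl⟩
    exact ConcreteCategory.congr_hom sq.fac_left m
  refine ⟨I.liftQ sq.lift.hom hw, Submodule.linearMap_qext _ ?_⟩
  exact congrArg ModuleCat.Hom.hom sq.fac_right

end SmallObject

/-- **Special preenvelope** (Bican–El Bashir–Enochs).  Every left `R`-module `M` can be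
included into a short exact sequence `0 → M → C → G → 0` with `C` cotorsion and `G`
flat. -/
theorem exists_cotorsion_preenvelope
    {R : Type u} [Ring R] (M : ModuleCat.{u} R) :
    ∃ (C G : ModuleCat.{u} R) (i : M ⟶ C) (p : C ⟶ G),
      C.IsCotorsion ∧ Module.IsFlat R G ∧
        Function.Injective i ∧ Function.Surjective p ∧ Function.Exact i p := by
  let J := flatInclusions R (PureTerm R)
  let fac := MorphismProperty.factorizationData J.rlp.llp J.rlp (0 : M ⟶ ModuleCat.of R PUnit)
  have hi : Mono fac.i := mono_of_llp_rlp (flatInclusions_le_monomorphisms R _) fac.hi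
  let I : Submodule R fac.Z := LinearMap.range fac.i.hom
  refine ⟨fac.Z, ModuleCat.of R (fac.Z ⧸ I), fac.i, ModuleCat.ofHom I.mkQ, ?_, ?_,
    (ModuleCat.mono_iff_injective fac.i).1 hi, I.mkQ_surjective,
    LinearMap.exact_map_mkQ_range fac.i.hom⟩
  · exact isCotorsion_of_flatExtending
      (flatExtending_of_rlp_zero (ModuleCat.isZero_of_subsingleton _) fac.hp)
  · exact isFlat_quotient_range_of_llp_rlp fac.hi
end

section
/- Let R be an associative unital ring and let F• be an unbounded cochain complex of flat left R-modules. Then F• can be included into a termwise short exact sequence of complexes 0 → F• → C• → G• → 0 in which C• is a contractible complex whose terms are flat cotorsion left R-modules and G• is a complex of flat left R-modules. -/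
universe u

open CategoryTheory

/-!
Every module embeds with flat cokernel into a module `E` such that linear maps to `E` extend along
all inclusions with flat cokernel, by the small object argument. It suffices to extend along the
inclusions `K ≤ R⁽ᵀ⁾` with flat cokernel into one fixed free module: every element of a flat module
`M ⧸ K` lies in a pure submodule which is the image of a map `R⁽ᵀ⁾ → M ⧸ K`. This map lifts to
some `φ : R⁽ᵀ⁾ → M`, so a map on `K` extends to `K ⊔ range φ`, and purity keeps the cokernel flat.
Such an `E` is cotorsion, as one sees on a projective resolution of a flat module.

Embed each term `Fⁿ` in this way into `Eⁿ`. The graded map from `F` to `E`, where `E` has zero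
differential, determines a map of complexes from `F` to the cone of `𝟙 E`, which is contractible
with terms `Eⁿ⁺¹ ⊕ Eⁿ`. Its composition with the projection onto `Eⁿ` is the given embedding, so
its cokernel is an extension of the flat module `Eⁿ / Fⁿ` by the flat module `Eⁿ⁺¹`.
-/

open Limits

namespace FlatCotorsion

section Modules

variable {R : Type*} [Ring R] {M M' M'' : Type*} [AddCommGroup M] [Module R M]
  [AddCommGroup M'] [Module R M'] [AddCommGroup M''] [Module R M'']

lemma sum_smul_sum_smul_eq_zero {ι κ : Type*} [Fintype ι] [Fintype κ] {r : ι → R}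
    {a : ι → κ → R} (h : ∀ j, ∑ i, r i * a i j = 0) (y : κ → M) :
    ∑ i, r i • ∑ j, a i j • y j = 0 := by
  simp only [Finset.smul_sum, smul_smul]
  rw [Finset.sum_comm]
  simp only [← Finset.sum_smul, h, zero_smul, Finset.sum_const_zero]

lemma isFlat_of_forall_exists_fintype
    (h : ∀ (n : ℕ) (r : Fin n → R) (x : Fin n → M), ∑ i, r i • x i = 0 →
      ∃ (J : Type) (_ : Fintype J) (a : Fin n → J → R) (y : J → M),
        (∀ i, x i = ∑ j, a i j • y j) ∧ ∀ j, ∑ i, r i * a i j = 0) :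
    Module.IsFlat R M := by
  intro n r x hx
  obtain ⟨J, _, a, y, hxy, hra⟩ := h n r x hx
  let e := Fintype.equivFin J
  refine ⟨Fintype.card J, fun i j => a i (e.symm j), fun j => y (e.symm j), fun i => ?_,
    fun j => hra _⟩
  rw [hxy, Equiv.sum_comp e.symm fun j => a i j • y j]

lemma isFlat_of_linearEquiv (e : M ≃ₗ[R] M') (hM : Module.IsFlat R M) : Module.IsFlat R M' := by
  intro n r x hx
  obtain ⟨m, a, y, hxy, hra⟩ := hM n r (fun i => e.symm (x i)) (by
    simp only [← map_smul, ← map_sum, hx, map_zero])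
  refine ⟨m, a, fun j => e (y j), fun i => ?_, hra⟩
  simp only [← map_smul, ← map_sum, ← hxy, LinearEquiv.apply_symm_apply]

lemma isFlat_of_subsingleton [Subsingleton M] : Module.IsFlat R M := fun _ _ _ _ =>
  ⟨0, fun _ => Fin.elim0, Fin.elim0, fun _ => Subsingleton.elim _ _, fun j => j.elim0⟩

lemma isFlat_of_exact {f : M' →ₗ[R] M} {g : M →ₗ[R] M''} (hf : Function.Injective f)
    (hfg : Function.Exact f g) (hg : Function.Surjective g)
    (hM' : Module.IsFlat R M') (hM'' : Module.IsFlat R M'') : Module.IsFlat R M := by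
  refine isFlat_of_forall_exists_fintype fun n r x hx => ?_
  obtain ⟨m, a, y, hxy, hra⟩ := hM'' n r (fun i => g (x i)) (by
    simp only [← map_smul, ← map_sum, hx, map_zero])
  choose z hz using fun j => hg (y j)
  have hker : ∀ i, g (x i - ∑ j, a i j • z j) = 0 := fun i => by
    simp only [map_sub, map_sum, map_smul, hz, hxy, sub_self]
  choose w hw using fun i => (hfg _).1 (hker i)
  obtain ⟨m', a', y', hwy', hra'⟩ := hM' n r w (hf (by
    simp only [map_sum, map_smul, hw, smul_sub, Finset.sum_sub_distrib, hx,
      sum_smul_sum_smul_eq_zero hra, sub_self, map_zero]))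
  refine ⟨Fin m ⊕ Fin m', inferInstance, fun i => Sum.elim (a i) (a' i),
    Sum.elim z fun j => f (y' j), fun i => ?_, Sum.rec hra hra'⟩
  have hfw : f (w i) = ∑ j, a' i j • f (y' j) := by
    simp only [hwy' i, map_sum, map_smul]
  rw [Fintype.sum_sum_type]
  simpa only [Sum.elim_inl, Sum.elim_inr, ← hfw, hw] using (add_sub_cancel _ _).symm

lemma isFlat_quotient_iff {N : Submodule R M} : Module.IsFlat R (M ⧸ N) ↔
    ∀ (n : ℕ) (r : Fin n → R) (x : Fin n → M), ∑ i, r i • x i ∈ N →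
      ∃ (m : ℕ) (a : Fin n → Fin m → R) (y : Fin m → M),
        (∀ i, x i - ∑ j, a i j • y j ∈ N) ∧ ∀ j, ∑ i, r i * a i j = 0 := by
  simp only [← Submodule.Quotient.mk_eq_zero N, ← N.mkQ_apply, map_sub, map_sum, map_smul,
    sub_eq_zero]
  constructor
  · intro h n r x hx
    obtain ⟨m, a, y, hxy, hra⟩ := h n r (fun i => N.mkQ (x i)) hx
    choose z hz using fun j => N.mkQ_surjective (y j)
    exact ⟨m, a, z, by simpa only [hz] using hxy, hra⟩
  · intro h n r x hx
    choose v hv using fun i => N.mkQ_surjective (x i)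
    obtain ⟨m, a, y, hxy, hra⟩ := h n r v (by simpa only [hv] using hx)
    exact ⟨m, a, fun j => N.mkQ (y j), by simpa only [hv] using hxy, hra⟩

lemma isFlat_quotient_sSup {S : Set (Submodule R M)} (hne : S.Nonempty)
    (hdir : DirectedOn (· ≤ ·) S) (hS : ∀ N ∈ S, Module.IsFlat R (M ⧸ N)) :
    Module.IsFlat R (M ⧸ sSup S) := by
  refine isFlat_quotient_iff.2 fun n r x hx => ?_
  obtain ⟨N, hN, hxN⟩ := (Submodule.mem_sSup_of_directed hne hdir).1 hx
  obtain ⟨m, a, y, hxy, hra⟩ := isFlat_quotient_iff.1 (hS N hN) n r x hxN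
  exact ⟨m, a, y, fun i => le_sSup hN (hxy i), hra⟩

/-- A submodule `N` of `M` is *pure* if every finite system of linear equations with constant
terms in `N` that has a solution in `M` has a solution in `N`. -/
def IsPure (N : Submodule R M) : Prop :=
  ∀ (p q : ℕ) (A : Fin p → Fin q → R) (c : Fin p → N) (y : Fin q → M),
    (∀ i, ∑ j, A i j • y j = c i) → ∃ z : Fin q → N, ∀ i, ∑ j, A i j • z j = c i

lemma IsPure.isFlat {N : Submodule R M} (hN : IsPure N) (hM : Module.IsFlat R M) :
    Module.IsFlat R N := by
  intro n r x hx
  obtain ⟨m, a, y, hxy, hra⟩ := hM n r (fun i => (x i : M)) (by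
    exact_mod_cast congrArg Subtype.val hx)
  obtain ⟨z, hz⟩ := hN n m a x y fun i => (hxy i).symm
  exact ⟨m, a, z, fun i => (hz i).symm, hra⟩

lemma IsPure.isFlat_quotient {N : Submodule R M} (hN : IsPure N) (hM : Module.IsFlat R M) :
    Module.IsFlat R (M ⧸ N) := by
  refine isFlat_quotient_iff.2 fun n r x hx => ?_
  obtain ⟨z, hz⟩ := hN 1 n (fun _ => r) (fun _ => ⟨_, hx⟩) x fun _ => rfl
  have hrz : ∑ i, r i • (z i : M) = ∑ i, r i • x i := by
    simpa using congrArg Subtype.val (hz 0)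
  obtain ⟨m, a, y, hxy, hra⟩ := hM n r (fun i => x i - z i) (by
    simp only [smul_sub, Finset.sum_sub_distrib, hrz, sub_self])
  refine ⟨m, a, y, fun i => ?_, hra⟩
  rw [← hxy, sub_sub_cancel]
  exact (z i).2

/-- Formal expressions for the elements of the pure submodule generated by one element: starting
from the generator, one may form linear combinations and pick the `j`-th entry of a solution of
the system with coefficients `A` and constant terms `c`. They form a set depending on `R` only,
which bounds the size of these submodules. -/
inductive Term (R : Type*) : Type _
  | gen : Term R
  | add (s t : Term R) : Term R
  | smul (r : R) (t : Term R) : Term R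
  | sol (p q : ℕ) (A : Fin p → Fin q → R) (c : Fin p → Term R) (j : Fin q) : Term R

open Classical in
/-- The value of a term at `b : M`, where a system without a solution is given the solution
`0`. -/
noncomputable def Term.eval (b : M) : Term R → M
  | .gen => b
  | .add s t => s.eval b + t.eval b
  | .smul r t => r • t.eval b
  | .sol _ q A c j =>
    if h : ∃ y : Fin q → M, ∀ i, ∑ k, A i k • y k = (c i).eval b then h.choose j else 0

variable (R) in
/-- The pure submodule generated by `b` through chosen solutions of linear systems. -/
def pureClosure (b : M) : Submodule R M where
  carrier := Set.range (Term.eval (R := R) b)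
  add_mem' := by
    rintro _ _ ⟨s, rfl⟩ ⟨t, rfl⟩
    exact ⟨.add s t, rfl⟩
  zero_mem' := ⟨.smul 0 .gen, zero_smul R b⟩
  smul_mem' := by
    rintro r _ ⟨t, rfl⟩
    exact ⟨.smul r t, rfl⟩

lemma isPure_pureClosure (b : M) : IsPure (pureClosure R b) := by
  intro p q A c y hy
  choose t ht using fun i => (c i).2
  have hex : ∃ y : Fin q → M, ∀ i, ∑ k, A i k • y k = (t i).eval b := ⟨y, fun i => by rw [hy, ht]⟩
  have hsol : ∀ j, (Term.sol p q A t j).eval b = hex.choose j := fun j => by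
    rw [Term.eval, dif_pos hex]
  refine ⟨fun j => ⟨_, Term.sol p q A t j, rfl⟩, fun i => Subtype.ext ?_⟩
  push_cast
  simp only [hsol, hex.choose_spec i, ht]

lemma range_linearCombination_eval (b : M) :
    LinearMap.range (Finsupp.linearCombination R (Term.eval (R := R) b)) = pureClosure R b := by
  rw [Finsupp.range_linearCombination]
  exact Submodule.span_eq (pureClosure R b)

lemma exists_isPure_range_linearMap (b : M) : ∃ φ : (Term R →₀ R) →ₗ[R] M,
    b ∈ LinearMap.range φ ∧ IsPure (LinearMap.range φ) := by
  refine ⟨Finsupp.linearCombination R (Term.eval b), ?_⟩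
  rw [range_linearCombination_eval]
  exact ⟨⟨.gen, rfl⟩, isPure_pureClosure b⟩

lemma exists_linearMap_range_of_ne_top {K : Submodule R M} (hK : Module.IsFlat R (M ⧸ K))
    (hne : K ≠ ⊤) : ∃ φ : (Term R →₀ R) →ₗ[R] M,
      Module.IsFlat R ((Term R →₀ R) ⧸ K.comap φ) ∧
      Module.IsFlat R (M ⧸ (K ⊔ LinearMap.range φ)) ∧ ¬ LinearMap.range φ ≤ K := by
  obtain ⟨b, -, hb⟩ := SetLike.exists_of_lt hne.lt_top
  obtain ⟨ψ, hbψ, hψ⟩ := exists_isPure_range_linearMap (R := R) (K.mkQ b)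
  obtain ⟨φ, rfl⟩ := Module.projective_lifting_property K.mkQ ψ K.mkQ_surjective
  have hcomap : LinearMap.ker (K.mkQ ∘ₗ φ) = K.comap φ := by
    rw [LinearMap.ker_comp, K.ker_mkQ]
  have hmap : (K ⊔ LinearMap.range φ).map K.mkQ = LinearMap.range (K.mkQ ∘ₗ φ) := by
    rw [Submodule.map_sup, K.mkQ_map_self, bot_sup_eq, LinearMap.range_comp]
  refine ⟨φ, ?_, ?_, fun hφ => hb ?_⟩
  · rw [← hcomap]
    exact isFlat_of_linearEquiv (K.mkQ ∘ₗ φ).quotKerEquivRange.symm (hψ.isFlat hK)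
  · refine isFlat_of_linearEquiv (Submodule.quotientQuotientEquivQuotient K _ le_sup_left) ?_
    rw [hmap]
    exact hψ.isFlat_quotient hK
  · obtain ⟨v, hv⟩ := hbψ
    rw [← K.ker_mkQ, LinearMap.mem_ker, ← hv]
    exact (Submodule.Quotient.mk_eq_zero K).2 (hφ ⟨v, rfl⟩)

lemma exists_comp_rangeRestrict_eq {φ : M →ₗ[R] M'} {k : M →ₗ[R] M''}
    (h : LinearMap.ker φ ≤ LinearMap.ker k) :
    ∃ ψ : LinearMap.range φ →ₗ[R] M'', ψ ∘ₗ φ.rangeRestrict = k := by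
  refine ⟨(LinearMap.ker φ).liftQ k h ∘ₗ φ.quotKerEquivRange.symm.toLinearMap,
    LinearMap.ext fun v => ?_⟩
  have hv : φ.quotKerEquivRange.symm (φ.rangeRestrict v) = (LinearMap.ker φ).mkQ v :=
    φ.quotKerEquivRange_symm_apply_image v _
  simp [hv]

lemma exists_le_linearPMap_domain_eq_sup_range (g : M →ₗ.[R] M') (φ : M'' →ₗ[R] M)
    (hφ : ∀ f : g.domain.comap φ →ₗ[R] M', ∃ k : M'' →ₗ[R] M', k ∘ₗ Submodule.subtype _ = f) :
    ∃ g' : M →ₗ.[R] M', g ≤ g' ∧ g'.domain = g.domain ⊔ LinearMap.range φ := by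
  obtain ⟨k, hk⟩ := hφ (g.toFun ∘ₗ φ.restrict fun _ hx => hx)
  have hkg : ∀ v (hv : φ v ∈ g.domain), k v = g ⟨φ v, hv⟩ := fun v hv =>
    LinearMap.congr_fun hk ⟨v, hv⟩
  have hker : LinearMap.ker φ ≤ LinearMap.ker k := fun v hv => by
    have hφv : φ v = 0 := hv
    rw [LinearMap.mem_ker, hkg v (by rw [hφv]; exact zero_mem _)]
    exact (congrArg g (Subtype.ext hφv)).trans g.map_zero
  obtain ⟨ψ, rfl⟩ := exists_comp_rangeRestrict_eq hker
  have hagree : ∀ (x : g.domain) (y : LinearMap.range φ), (x : M) = y → g x = ψ y := by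
    rintro ⟨_, hx⟩ ⟨_, v, rfl⟩ rfl
    exact (hkg v hx).symm
  exact ⟨g.sup ⟨LinearMap.range φ, ψ⟩ hagree, LinearPMap.left_le_sup _ _ _, rfl⟩

end Modules

/-- `E` is *flat-injective* if every linear map to `E` from a submodule with flat quotient extends
to the ambient module. -/
def FlatInjective (R : Type u) [Ring R] (E : Type*) [AddCommGroup E] [Module R E] : Prop :=
  ∀ (P : Type u) [AddCommGroup P] [Module R P] (K : Submodule R P), Module.IsFlat R (P ⧸ K) →
    ∀ f : K →ₗ[R] E, ∃ g : P →ₗ[R] E, g ∘ₗ K.subtype = f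

section FlatInjective

variable {R : Type u} [Ring R] {E : Type*} [AddCommGroup E] [Module R E]

lemma FlatInjective.of_free (h : ∀ K : Submodule R (Term R →₀ R),
    Module.IsFlat R ((Term R →₀ R) ⧸ K) → ∀ f : K →ₗ[R] E,
      ∃ g : (Term R →₀ R) →ₗ[R] E, g ∘ₗ K.subtype = f) : FlatInjective R E := by
  intro P _ _ K hK f
  obtain ⟨g, hfg, ⟨-, hg⟩, hmax⟩ := zorn_le_nonempty₀
    {g : P →ₗ.[R] E | ⟨K, f⟩ ≤ g ∧ Module.IsFlat R (P ⧸ g.domain)} (fun c hc hchain y hy =>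
      ⟨LinearPMap.sSup c hchain.directedOn,
        ⟨(hc hy).1.trans (LinearPMap.le_sSup _ hy),
          isFlat_quotient_sSup ⟨_, y, hy, rfl⟩
            (directedOn_image.2 (hchain.directedOn.mono' fun _ _ _ _ h => h.1))
            (by rintro _ ⟨z, hz, rfl⟩; exact (hc hz).2)⟩,
        fun z hz => LinearPMap.le_sSup _ hz⟩) ⟨K, f⟩ ⟨le_rfl, hK⟩
  have htop : g.domain = ⊤ := by
    by_contra hne
    obtain ⟨φ, hcomap, hsup, hrange⟩ := exists_linearMap_range_of_ne_top hg hne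
    obtain ⟨g', hgg', hdom⟩ := exists_le_linearPMap_domain_eq_sup_range g φ (h _ hcomap)
    have hg' : g' ≤ g := hmax ⟨hfg.trans hgg', by rwa [hdom]⟩ hgg'
    exact hrange (le_sup_right.trans (hdom.symm.le.trans hg'.1))
  refine ⟨g.toFun ∘ₗ LinearMap.codRestrict g.domain LinearMap.id (by simp [htop]),
    LinearMap.ext fun x => ?_⟩
  exact (hfg.2 (x := x) (y := ⟨x, by simp [htop]⟩) rfl).symm

end FlatInjective

section MonoWithCokernel

variable {C : Type*} [Category* C] [Abelian C] (P : ObjectProperty C)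

/-- The monomorphisms whose cokernel satisfies `P`. -/
def monoWithCokernel : MorphismProperty C := fun _ _ f => Mono f ∧ P (cokernel f)

variable {P}

lemma monoWithCokernel_iff_of_shortExact [P.IsClosedUnderIsomorphisms] {S : ShortComplex C}
    (hS : S.ShortExact) : monoWithCokernel P S.f ↔ P S.X₃ := by
  have := hS.epi_g
  rw [monoWithCokernel, and_iff_right hS.mono_f]
  exact P.prop_iff_of_iso
    ((cokernelIsCokernel S.f).coconePointUniqueUpToIso hS.exact.gIsCokernel)

lemma shortExact_cokernel {X Y : C} (f : X ⟶ Y) [Mono f] :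
    (ShortComplex.mk f (cokernel.π f) (cokernel.condition f)).ShortExact where
  exact := ShortComplex.exact_cokernel f

lemma shortExact_cokernel_comp {X Y Z : C} (f : X ⟶ Y) (g : Y ⟶ Z) [Mono g] :
    (ShortComplex.mk (cokernel.map f (f ≫ g) (𝟙 X) g (by simp))
      (cokernel.map (f ≫ g) g f (𝟙 Z) (by simp)) (by aesop)).ShortExact where
  exact := (kernelCokernelCompSequence_exact f g).exact 3
  mono_f := ((kernelCokernelCompSequence_exact f g).exact 2).mono_g
    ((isZero_kernel_of_mono g).eq_of_src _ _)
  epi_g := inferInstance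

lemma shortExact_kernel_cokernel {X Y Z : C} (f : X ⟶ Y) (g : Y ⟶ Z) [Mono (f ≫ g)] [Epi g] :
    (ShortComplex.mk (kernelCokernelCompSequence.δ f g)
      (cokernel.map f (f ≫ g) (𝟙 X) g (by simp))
      ((kernelCokernelCompSequence_exact f g).toIsComplex.zero 2)).ShortExact where
  exact := (kernelCokernelCompSequence_exact f g).exact 2
  mono_f := ((kernelCokernelCompSequence_exact f g).exact 1).mono_g
    ((isZero_kernel_of_mono (f ≫ g)).eq_of_src _ _)
  epi_g := ((kernelCokernelCompSequence_exact f g).exact 3).epi_f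
    ((isZero_cokernel_of_epi g).eq_of_tgt _ _)

lemma prop_of_monoWithCokernel [P.IsClosedUnderExtensions] {X Y : C} {f : X ⟶ Y}
    (hf : monoWithCokernel P f) (hX : P X) : P Y := by
  have := hf.1
  exact P.prop_X₂_of_shortExact (shortExact_cokernel f) hX hf.2

lemma monoWithCokernel_of_comp [P.IsClosedUnderIsomorphisms] [P.IsClosedUnderExtensions]
    {S : ShortComplex C} (hS : S.ShortExact) (h₁ : P S.X₁) {X : C} {f : X ⟶ S.X₂}
    (hf : monoWithCokernel P (f ≫ S.g)) : monoWithCokernel P f := by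
  have := hS.mono_f
  have := hS.epi_g
  have := hf.1
  have hker : P (kernel S.g) :=
    P.prop_of_iso (hS.fIsKernel.conePointUniqueUpToIso (limit.isLimit _)) h₁
  exact ⟨mono_of_mono f S.g, P.prop_X₂_of_shortExact (shortExact_kernel_cokernel f S.g) hker hf.2⟩

instance [P.IsClosedUnderIsomorphisms] : (monoWithCokernel P).IsStableUnderCobaseChange where
  of_isPushout {A A' B B' f g f' g'} sq hf := by
    have := isIso_cokernel_map_of_isPushout sq.flip
    exact ⟨(MorphismProperty.monomorphisms C).of_isPushout sq hf.1,
      P.prop_of_iso (asIso (cokernel.map _ _ _ _ sq.flip.w)) hf.2⟩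

instance [P.IsClosedUnderIsomorphisms] [P.ContainsZero] [P.IsClosedUnderExtensions] :
    (monoWithCokernel P).IsMultiplicative where
  id_mem X := ⟨inferInstance, P.prop_of_isZero (isZero_cokernel_of_epi (𝟙 X))⟩
  comp_mem {X Y Z} f g hf hg := by
    have := hf.1
    have := hg.1
    exact ⟨mono_comp f g, P.prop_X₂_of_shortExact (shortExact_cokernel_comp f g) hf.2 hg.2⟩

instance {J : Type*} [Category* J] [HasColimitsOfShape J C] [HasExactColimitsOfShape J C]
    [P.IsClosedUnderIsomorphisms] [P.IsClosedUnderColimitsOfShape J] :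
    (monoWithCokernel P).IsStableUnderColimitsOfShape J where
  condition X₁ X₂ c₁ c₂ h₁ h₂ f hf φ hφ := by
    have (j : J) : Mono (f.app j) := (hf j).1
    have := NatTrans.mono_of_mono_app f
    have hS := shortExact_cokernel f
    let c₃ := colimit.cocone (cokernel f)
    let g : c₂.pt ⟶ c₃.pt := h₂.desc ((Cocone.precompose (cokernel.π f)).obj c₃)
    have hg : ∀ j, c₂.ι.app j ≫ g = (cokernel.π f).app j ≫ c₃.ι.app j := fun j => h₂.fac _ j
    have hex := colim.exact_mapShortComplex hS.exact h₁ h₂ (colimit.isColimit _) φ g hφ hg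
    have hmono : Mono φ := colim.map_mono' f h₁ h₂ φ (by simpa using hφ)
    have hepi : Epi g := colim.map_epi' (cokernel.π f) c₂ (colimit.isColimit _) g hg
    refine (monoWithCokernel_iff_of_shortExact { exact := hex, mono_f := hmono, epi_g := hepi }).2
      (P.prop_colimit _ fun j => ?_)
    exact (monoWithCokernel_iff_of_shortExact
      (hS.map_of_exact ((evaluation J C).obj j))).1 (hf j)

instance [P.IsClosedUnderIsomorphisms] [P.ContainsZero] [P.IsClosedUnderExtensions] :
    P.IsClosedUnderFiniteCoproducts := by
  have : P.IsClosedUnderBinaryCoproducts := .mk' (by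
    rintro _ ⟨F, hF⟩
    exact P.prop_of_iso
      (biprod.isoCoprod _ _ ≪≫ (HasColimit.isoOfNatIso (diagramIsoPair F)).symm)
      (P.prop_biprod (hF ⟨.left⟩) (hF ⟨.right⟩)))
  exact .mk'

lemma isClosedUnderColimitsOfShape_discrete {J : Type*} [P.IsClosedUnderFiniteCoproducts]
    [HasColimitsOfShape (Finset (Discrete J)) C]
    [P.IsClosedUnderColimitsOfShape (Finset (Discrete J))] :
    P.IsClosedUnderColimitsOfShape (Discrete J) where
  colimitsOfShape_le := by
    have := ObjectProperty.IsClosedUnderBinaryCoproducts.closedUnderIsomorphisms P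
    rintro X ⟨⟨F, ι, hι⟩, hF⟩
    have hX : P (colimit (CoproductsFromFiniteFiltered.liftToFinsetObj F)) :=
      P.prop_colimit _ fun s => P.prop_coproduct fun x => hF x
    exact P.prop_of_iso ((CoproductsFromFiniteFiltered.liftToFinsetColimitCocone
      F).isColimit.coconePointUniqueUpToIso hι) hX

end MonoWithCokernel

section SmallObjectArgument

open MorphismProperty

universe w

variable {C : Type*} [Category* C] {I W : MorphismProperty C}

lemma exists_factorization_of_hasSmallObjectArgument [HasSmallObjectArgument.{w} I]
    [W.IsStableUnderCobaseChange] [IsStableUnderCoproducts.{w} W]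
    [IsStableUnderTransfiniteComposition.{w} W] (hI : I ≤ W) {X Y : C} (f : X ⟶ Y) :
    ∃ (Z : C) (i : X ⟶ Z) (p : Z ⟶ Y), W i ∧ I.rlp p ∧ i ≫ p = f := by
  obtain ⟨κ, _, _, _⟩ := HasSmallObjectArgument.exists_cardinal (I := I)
  have hW : (coproducts.{w} I).pushouts.transfiniteCompositionsOfShape κ.ord.ToType ≤ W := by
    refine (transfiniteCompositionsOfShape_monotone _ ?_).trans
      (W.transfiniteCompositionsOfShape_le _)
    simpa only [pushouts_le_iff, coproducts_le_iff] using hI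
  exact ⟨_, _, _, hW _ (SmallObject.transfiniteCompositionsOfShape_ιObj I κ f),
    SmallObject.rlp_πObj I κ f, SmallObject.ιObj_πObj I κ f⟩

lemma hasSmallObjectArgument_of_le_monomorphisms [Abelian C] [IsGrothendieckAbelian.{w} C]
    [IsSmall.{w} I] (hI : I ≤ monomorphisms C) : HasSmallObjectArgument.{w} I := by
  obtain ⟨κ, hκ', hκ⟩ := HasCardinalLT.exists_regular_cardinal_forall.{w}
    fun i : I.toSet => Subobject i.1.left
  have : Fact κ.IsRegular := ⟨hκ'⟩
  have : Nonempty κ.ord.ToType := by simpa using hκ'.ne_zero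
  have := WellFoundedLT.toOrderBot κ.ord.ToType
  have hpushouts : (coproducts.{w} I).pushouts ≤ monomorphisms C := by
    simpa only [pushouts_le_iff, coproducts_le_iff] using hI
  refine ⟨κ, inferInstance, inferInstance, { preservesColimit {A B X Y} i hi f hf := ?_ }⟩
  let hf' : (monomorphisms C).TransfiniteCompositionOfShape κ.ord.ToType f :=
    { toTransfiniteCompositionOfShape := hf.toTransfiniteCompositionOfShape
      map_mem j hj := hpushouts _ (by simpa using (hf.attachCells j hj).pushouts_coproducts) }
  have (j j' : κ.ord.ToType) (φ : j ⟶ j') : Mono (hf.F.map φ) := hf'.mem_map φ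
  exact IsGrothendieckAbelian.preservesColimit_coyoneda_obj_of_mono hf.F
    (hκ ⟨Arrow.mk i, hi⟩)

end SmallObjectArgument

section Flat

variable {R : Type u} [Ring R]

variable (R) in
/-- The property of being flat, for objects of the category of left `R`-modules. -/
def flat : ObjectProperty (ModuleCat.{u} R) := fun M => Module.IsFlat R M

instance : (flat R).IsClosedUnderIsomorphisms where
  of_iso e h := isFlat_of_linearEquiv e.toLinearEquiv h

instance : (flat R).ContainsZero where
  exists_zero := ⟨ModuleCat.of R PUnit, ModuleCat.isZero_of_subsingleton _, isFlat_of_subsingleton⟩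

instance : (flat R).IsClosedUnderExtensions where
  prop_X₂_of_shortExact {S} hS h₁ h₃ := isFlat_of_exact hS.moduleCat_injective_f
    ((ShortComplex.ShortExact.moduleCat_exact_iff_function_exact S).1 hS.exact)
    hS.moduleCat_surjective_g h₁ h₃

lemma exists_rep_of_isColimit {J : Type u} [SmallCategory J] [IsFiltered J]
    {F : J ⥤ ModuleCat.{u} R} {c : Cocone F} (hc : IsColimit c) {n : ℕ} (x : Fin n → c.pt) :
    ∃ (k : J) (y : Fin n → F.obj k), ∀ i, c.ι.app k (y i) = x i := by
  classical
  choose j y hy using fun i => Concrete.isColimit_exists_rep F hc (x i)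
  obtain ⟨k, hk⟩ := IsFiltered.sup_objs_exists (Finset.univ.image j)
  let f (i : Fin n) : j i ⟶ k := (hk (Finset.mem_image_of_mem j (Finset.mem_univ i))).some
  refine ⟨k, fun i => F.map (f i) (y i), fun i => ?_⟩
  rw [← ConcreteCategory.comp_apply, c.w, hy]

instance (J : Type u) [SmallCategory J] [IsFiltered J] :
    (flat R).IsClosedUnderColimitsOfShape J where
  colimitsOfShape_le := by
    rintro M ⟨⟨F, ι, hι⟩, hF⟩ n r x hx
    obtain ⟨j, y, hyx⟩ := exists_rep_of_isColimit hι x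
    obtain ⟨k, f, hf⟩ := (hι.eq_iff' (∑ i, r i • y i) 0).1 (by
      simpa only [map_sum, map_smul, map_zero, hyx] using hx)
    obtain ⟨m, a, z, hyz, hra⟩ := hF k n r (fun i => F.map f (y i)) (by
      simpa only [map_sum, map_smul, map_zero] using hf)
    refine ⟨m, a, fun l => ι.app k (z l), fun i => ?_, hra⟩
    simp only [← map_smul, ← map_sum, ← hyz, ← hyx]
    exact (ConcreteCategory.congr_hom (ι.naturality f) (y i)).symm

instance : MorphismProperty.IsStableUnderCoproducts.{u} (monoWithCokernel (flat R)) where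
  isStableUnderCoproductsOfShape J := by
    have : (flat R).IsClosedUnderColimitsOfShape (Discrete J) :=
      isClosedUnderColimitsOfShape_discrete
    infer_instance

instance : MorphismProperty.IsStableUnderFilteredColimits.{u, u} (monoWithCokernel (flat R)) where
  isStableUnderColimitsOfShape J _ _ := by
    have : HasExactColimitsOfShape J (ModuleCat.{u} R) := inferInstance
    infer_instance

lemma monoWithCokernel_flat_subtype {M : Type u} [AddCommGroup M] [Module R M]
    {K : Submodule R M} (hK : Module.IsFlat R (M ⧸ K)) :
    monoWithCokernel (flat R) (ModuleCat.ofHom K.subtype) := by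
  let S : ShortComplex (ModuleCat.{u} R) :=
    .mk (ModuleCat.ofHom K.subtype) (ModuleCat.ofHom K.mkQ) (by ext x; simp)
  exact (monoWithCokernel_iff_of_shortExact (S := S) (ModuleCat.shortComplex_shortExact S
    (LinearMap.exact_subtype_mkQ K) K.injective_subtype K.mkQ_surjective)).2 hK

variable (R) in
/-- The inclusions into the free module on the terms of its submodules with flat quotient, to which
the small object argument is applied. -/
def generators : MorphismProperty (ModuleCat.{u} R) :=
  .ofHoms fun K : {K : Submodule R (Term R →₀ R) // Module.IsFlat R ((Term R →₀ R) ⧸ K)} =>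
    (ModuleCat.ofHom K.1.subtype : ModuleCat.of R K.1 ⟶ ModuleCat.of R (Term R →₀ R))

lemma generators_ofHom_subtype {K : Submodule R (Term R →₀ R)}
    (hK : Module.IsFlat R ((Term R →₀ R) ⧸ K)) :
    generators R (ModuleCat.ofHom K.subtype : ModuleCat.of R K ⟶ ModuleCat.of R (Term R →₀ R)) :=
  let K' : {K : Submodule R (Term R →₀ R) // Module.IsFlat R ((Term R →₀ R) ⧸ K)} := ⟨K, hK⟩
  .mk K'

lemma generators_le : generators R ≤ monoWithCokernel (flat R) := by
  rintro _ _ _ ⟨K⟩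
  exact monoWithCokernel_flat_subtype K.2

instance : MorphismProperty.IsSmall.{u} (generators R) := by
  dsimp only [generators]
  infer_instance

lemma exists_flatInjective_monoWithCokernel_flat (M : ModuleCat.{u} R) :
    ∃ (E : ModuleCat.{u} R) (i : M ⟶ E), FlatInjective R E ∧ monoWithCokernel (flat R) i := by
  have := hasSmallObjectArgument_of_le_monomorphisms (I := generators R) fun _ _ _ h =>
    (generators_le _ h).1
  obtain ⟨E, i, p, hi, hp, -⟩ := exists_factorization_of_hasSmallObjectArgument generators_le
    (0 : M ⟶ ModuleCat.of R PUnit)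
  refine ⟨E, i, .of_free fun K hK f => ?_, hi⟩
  let j : ModuleCat.of R K ⟶ ModuleCat.of R (Term R →₀ R) := ModuleCat.ofHom K.subtype
  have : HasLiftingProperty j p := hp j (generators_ofHom_subtype hK)
  have sq : CommSq (ModuleCat.ofHom f) j p 0 := ⟨by ext⟩
  exact ⟨sq.lift.hom, ModuleCat.hom_ext_iff.1 sq.fac_left⟩

lemma isCotorsion_of_flatInjective (C : ModuleCat.{u} R) (hC : FlatInjective R C) :
    C.IsCotorsion := by
  intro F hF
  let P := ProjectiveResolution.of F
  have hπ : Function.Surjective (P.π.f 0) := (ModuleCat.epi_iff_surjective _).1 inferInstance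
  have hd₁ : LinearMap.range (P.complex.d 1 0).hom = LinearMap.ker (P.π.f 0).hom :=
    P.exact₀.moduleCat_range_eq_ker
  have hd₂ : LinearMap.range (P.complex.d 2 1).hom = LinearMap.ker (P.complex.d 1 0).hom :=
    (P.exact_succ 0).moduleCat_range_eq_ker
  have hflat : Module.IsFlat R (P.complex.X 0 ⧸ LinearMap.range (P.complex.d 1 0).hom) := by
    rw [hd₁]
    exact isFlat_of_linearEquiv ((P.π.f 0).hom.quotKerEquivOfSurjective hπ).symm hF
  have hzero : IsZero ((P.complex.linearYonedaObj ℤ C).homology 1) := by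
    rw [← HomologicalComplex.exactAt_iff_isZero_homology,
      HomologicalComplex.exactAt_iff' _ 0 1 2 (by simp) (by simp), ShortComplex.moduleCat_exact_iff]
    intro (x : P.complex.X 1 ⟶ C) (hx : P.complex.d 2 1 ≫ x = 0)
    have hker : LinearMap.ker (P.complex.d 1 0).hom ≤ LinearMap.ker x.hom := by
      rw [← hd₂, LinearMap.range_le_ker_iff]
      exact ModuleCat.hom_ext_iff.1 hx
    obtain ⟨ψ, hψ⟩ := exists_comp_rangeRestrict_eq hker
    obtain ⟨g, rfl⟩ := hC _ _ hflat ψ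
    exact ⟨ModuleCat.ofHom g, ModuleCat.hom_ext hψ⟩
  exact ModuleCat.subsingleton_of_isZero (hzero.of_iso (P.isoExt (R := ℤ) 1 C))

lemma FlatInjective.of_splitting {S : ShortComplex (ModuleCat.{u} R)} (s : S.Splitting)
    (h₁ : FlatInjective R S.X₁) (h₃ : FlatInjective R S.X₃) : FlatInjective R S.X₂ := by
  intro P _ _ K hK f
  obtain ⟨g₁, hg₁⟩ := h₁ P K hK (s.r.hom ∘ₗ f)
  obtain ⟨g₃, hg₃⟩ := h₃ P K hK (S.g.hom ∘ₗ f)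
  refine ⟨S.f.hom ∘ₗ g₁ + s.s.hom ∘ₗ g₃, ?_⟩
  rw [LinearMap.add_comp, LinearMap.comp_assoc, LinearMap.comp_assoc, hg₁, hg₃]
  exact LinearMap.ext fun x => ConcreteCategory.congr_hom s.id (f x)

end Flat

section Cone

open CochainComplex HomComplex

variable {C : Type*} [Category* C] [Preadditive C] [HasBinaryBiproducts C]
  {K L : CochainComplex C ℤ}

/-- The splitting of the terms of a mapping cone given by the coordinates. -/
noncomputable def mappingConeSplitting (φ : K ⟶ L) (n : ℤ) :
    (ShortComplex.mk ((mappingCone.inl φ).v (n + 1) n (by lia))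
      ((mappingCone.snd φ).v n n (add_zero n)) (mappingCone.inl_v_snd_v _ _ _ _)).Splitting where
  r := (mappingCone.fst φ).1.v n (n + 1) rfl
  s := (mappingCone.inr φ).f n
  id := mappingCone.id_X φ n (n + 1) rfl

/-- The map of complexes to a cone of an identity morphism corresponding to a map of graded
objects. -/
noncomputable def toConeId (α : Cochain K L 0) : K ⟶ mappingCone (𝟙 L) :=
  mappingCone.lift _ (Cocycle.mk (-δ 0 1 α) 2 rfl (by simp [δ_δ 0 1 2])) α (by simp)

lemma toConeId_f_snd_v (α : Cochain K L 0) (n : ℤ) :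
    (toConeId α).f n ≫ (mappingCone.snd _).v n n (add_zero n) = α.v n n (add_zero n) := by
  simp [toConeId]

end Cone

lemma monoWithCokernel_toConeId_f {C : Type*} [Category* C] [Abelian C] {P : ObjectProperty C}
    [P.IsClosedUnderIsomorphisms] [P.IsClosedUnderExtensions] {K L : CochainComplex C ℤ}
    {α : CochainComplex.HomComplex.Cochain K L 0} {n : ℤ} (hL : P (L.X (n + 1)))
    (hα : monoWithCokernel P (α.v n n (add_zero n))) : monoWithCokernel P ((toConeId α).f n) := by
  rw [← toConeId_f_snd_v] at hα
  exact monoWithCokernel_of_comp (mappingConeSplitting (𝟙 L) n).shortExact hL hα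

end FlatCotorsion

open CochainComplex FlatCotorsion

/-- Every complex of flat left `R`-modules `F•` can be included into a termwise short
exact sequence of complexes `0 → F• → C• → G• → 0` in which `C•` is a contractible
complex of flat cotorsion `R`-modules and `G•` is a complex of flat `R`-modules. -/
theorem exists_embedding_into_contractible_complex_of_flat_cotorsion
    {R : Type u} [Ring R] (F : CochainComplex (ModuleCat.{u} R) ℤ)
    (hflat : ∀ n : ℤ, Module.IsFlat R (F.X n)) :
    ∃ (C G : CochainComplex (ModuleCat.{u} R) ℤ) (i : F ⟶ C) (p : C ⟶ G),
      (∀ n : ℤ, Module.IsFlat R (C.X n) ∧ (C.X n).IsCotorsion) ∧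
      Nonempty (Homotopy (𝟙 C) 0) ∧
      (∀ n : ℤ, Module.IsFlat R (G.X n)) ∧
      (∀ n : ℤ, Function.Injective (i.f n) ∧ Function.Surjective (p.f n) ∧
        Function.Exact (i.f n) (p.f n)) := by
  choose E ι hinj hι using fun n => exists_flatInjective_monoWithCokernel_flat (F.X n)
  have hE (n : ℤ) : flat R (E n) := prop_of_monoWithCokernel (hι n) (hflat n)
  let K : CochainComplex (ModuleCat.{u} R) ℤ := { X := E, d := fun _ _ => 0 }
  let i : F ⟶ mappingCone (𝟙 K) := toConeId (.ofHoms ι)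
  have hi (n : ℤ) : monoWithCokernel (flat R) (i.f n) :=
    monoWithCokernel_toConeId_f (hE (n + 1)) (by
      simpa only [HomComplex.Cochain.ofHoms_v] using hι n)
  have (n : ℤ) : Mono (i.f n) := (hi n).1
  have := HomologicalComplex.mono_of_mono_f i inferInstance
  have hS (n : ℤ) := (shortExact_cokernel i).map_of_exact (HomologicalComplex.eval _ _ n)
  let s (n : ℤ) := mappingConeSplitting (𝟙 K) n
  refine ⟨_, _, i, cokernel.π i, fun n => ⟨?_, ?_⟩, ⟨mappingCone.homotopyToZeroOfId K⟩,
    fun n => ?_, fun n => ⟨?_, ?_, ?_⟩⟩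
  · exact (flat R).prop_X₂_of_shortExact (s n).shortExact (hE (n + 1)) (hE n)
  · exact isCotorsion_of_flatInjective _ (.of_splitting (s n) (hinj (n + 1)) (hinj n))
  · exact (monoWithCokernel_iff_of_shortExact (hS n)).1 (hi n)
  · exact (hS n).moduleCat_injective_f
  · exact (hS n).moduleCat_surjective_g
  · exact (ShortComplex.ShortExact.moduleCat_exact_iff_function_exact _).1 (hS n).exact
end
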